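/- Let Λ > 0, κ > 0 and R > √(3/Λ). There exist ε₀ > 0 and C* > 0 (depending only on Λ, κ, R) such that for every h₀ ∈ C¹([0,R]) with sup_{0≤r≤R}|h₀(r)| + sup_{0≤r≤R}|h₀'(r)| < ε₀, there exists a unique C¹ solution h : [0,∞)×[0,R] → ℝ of the reduced Einstein-Λ-scalar field equation Dh = G(h − h̄) with h(0,·) = h₀; moreover this solution satisfies sup_{u≥0, 0≤r≤R}|h(u,r)| = sup_{0≤r≤R}|h₀(r)| and sup_{u≥0, 0≤r≤R}(|h(u,r)| + |∂_r h(u,r)|) ≤ (1+C*)·(sup_{0≤r≤R}|h₀(r)| + sup_{0≤r≤R}|h₀'(r)|). -/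

import Mathlib

noncomputable section

open Real Set

/-- Radial average `h̄(u,r) = (1/r)∫₀ʳ h(u,s) ds`, with `h̄(u,0) = h(u,0)`. -/
def radAvg (h : ℝ → ℝ → ℝ) (u r : ℝ) : ℝ :=
  if r = 0 then h u 0 else (1 / r) * ∫ s in (0:ℝ)..r, h u s

/-- Metric coefficient `f(u,r) = exp((κ/2)∫₀ʳ (h−h̄)²/s ds)`. -/
def metricF (κ : ℝ) (h : ℝ → ℝ → ℝ) (u r : ℝ) : ℝ :=
  Real.exp ((κ / 2) * ∫ s in (0:ℝ)..r, (h u s - radAvg h u s) ^ 2 / s)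

/-- Metric coefficient `f̃(u,r) = (1/r)∫₀ʳ f ds − (Λ/r)∫₀ʳ f s² ds`, with `f̃(u,0)=1`. -/
def metricFt (Λ κ : ℝ) (h : ℝ → ℝ → ℝ) (u r : ℝ) : ℝ :=
  if r = 0 then 1
  else (1 / r) * (∫ s in (0:ℝ)..r, metricF κ h u s)
    - (Λ / r) * (∫ s in (0:ℝ)..r, metricF κ h u s * s ^ 2)

/-- Zeroth order coefficient `G(u,r) = (1/(2r))[(f − f̃) − Λ f r²]`. -/
def coefG (Λ κ : ℝ) (h : ℝ → ℝ → ℝ) (u r : ℝ) : ℝ :=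
  (1 / (2 * r)) * ((metricF κ h u r - metricFt Λ κ h u r) - Λ * metricF κ h u r * r ^ 2)

/-- Partial derivative of `h` in the Bondi time `u`, one-sided on `[0,∞)`. -/
def pdU (h : ℝ → ℝ → ℝ) (u r : ℝ) : ℝ :=
  derivWithin (fun u' => h u' r) (Ici 0) u

/-- Partial derivative of `h` in the radial coordinate `r`, on `[0,R]`. -/
def pdR (R : ℝ) (h : ℝ → ℝ → ℝ) (u r : ℝ) : ℝ :=
  derivWithin (fun r' => h u r') (Icc 0 R) r

/-- `h : [0,∞)×[0,R] → ℝ` is a C¹ solution of the reduced Einstein-Λ-scalar field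
equation `Dh = G(h − h̄)`: it is continuous with continuous partial derivatives on the
rectangular domain and satisfies the equation for `0 < r ≤ R`. -/
def IsC1Solution (Λ κ R : ℝ) (h : ℝ → ℝ → ℝ) : Prop :=
  ContinuousOn (fun p : ℝ × ℝ => h p.1 p.2) (Ici 0 ×ˢ Icc 0 R) ∧
  (∀ u ∈ Ici (0:ℝ), ∀ r ∈ Icc (0:ℝ) R,
      DifferentiableWithinAt ℝ (fun u' => h u' r) (Ici 0) u ∧
      DifferentiableWithinAt ℝ (fun r' => h u r') (Icc 0 R) r) ∧
  ContinuousOn (fun p : ℝ × ℝ => pdU h p.1 p.2) (Ici 0 ×ˢ Icc 0 R) ∧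
  ContinuousOn (fun p : ℝ × ℝ => pdR R h p.1 p.2) (Ici 0 ×ˢ Icc 0 R) ∧
  ∀ u ∈ Ici (0:ℝ), ∀ r ∈ Ioc (0:ℝ) R,
    pdU h u r - metricFt Λ κ h u r / 2 * pdR R h u r
      = coefG Λ κ h u r * (h u r - radAvg h u r)

/-! ### One-variable calculus on a closed interval -/

/-- Clamping of a real number to `[0, R]`. -/
def clampIcc (R r : ℝ) : ℝ := max 0 (min r R)

@[fun_prop]
theorem continuous_clampIcc (R : ℝ) : Continuous (clampIcc R) := by
  unfold clampIcc; fun_prop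

theorem clampIcc_mem {R : ℝ} (hR : 0 ≤ R) (r : ℝ) : clampIcc R r ∈ Icc 0 R :=
  ⟨le_max_left _ _, max_le hR (min_le_right _ _)⟩

theorem clampIcc_of_mem {R r : ℝ} (hr : r ∈ Icc 0 R) : clampIcc R r = r := by
  unfold clampIcc
  rw [min_eq_left hr.2, max_eq_right hr.1]

theorem abs_clampIcc_sub_le (R a b : ℝ) : |clampIcc R a - clampIcc R b| ≤ |a - b| := by
  unfold clampIcc
  refine (abs_max_sub_max_le_max _ _ _ _).trans ?_
  refine max_le (by simp) ((abs_min_sub_min_le_max _ _ _ _).trans ?_)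
  simp

/-- The mean of `ψ` over the segment from `a` to `b`. -/
def segMean (ψ : ℝ → ℝ) (a b : ℝ) : ℝ := ∫ t in (0:ℝ)..1, ψ (a + t * (b - a))

theorem segMean_self (ψ : ℝ → ℝ) (a : ℝ) : segMean ψ a a = ψ a := by
  simp [segMean]

theorem segment_mem_Icc {R a b t : ℝ} (ha : a ∈ Icc 0 R) (hb : b ∈ Icc 0 R)
    (ht : t ∈ Icc (0:ℝ) 1) : a + t * (b - a) ∈ Icc 0 R := by
  have h := (convex_Icc (0:ℝ) R) ha hb (a := 1 - t) (b := t) (by linarith [ht.2]) ht.1 (by ring)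
  have e : (1 - t) • a + t • b = a + t * (b - a) := by simp; ring
  rwa [e] at h

theorem sub_eq_mul_segMean {R : ℝ} {φ ψ : ℝ → ℝ}
    (hφ : ∀ r ∈ Icc 0 R, HasDerivWithinAt φ (ψ r) (Icc 0 R) r) (hψ : Continuous ψ)
    {a b : ℝ} (ha : a ∈ Icc 0 R) (hb : b ∈ Icc 0 R) :
    φ b - φ a = (b - a) * segMean ψ a b := by
  have hd : ∀ t ∈ Icc (0:ℝ) 1,
      HasDerivWithinAt (fun t => φ (a + t * (b - a))) (ψ (a + t * (b - a)) * (b - a))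
        (Icc 0 1) t := by
    intro t ht
    have h1 : HasDerivWithinAt (fun t : ℝ => a + t * (b - a)) (b - a) (Icc 0 1) t := by
      simpa using (((hasDerivAt_id t).mul_const (b - a)).const_add a).hasDerivWithinAt
    exact (hφ _ (segment_mem_Icc ha hb ht)).comp t h1
      (fun t ht => segment_mem_Icc ha hb ht)
  have hint := intervalIntegral.integral_eq_sub_of_hasDerivAt_of_le zero_le_one
    (fun t ht => (hd t ht).continuousWithinAt)
    (fun t ht => (hd t ⟨ht.1.le, ht.2.le⟩).hasDerivAt (Icc_mem_nhds ht.1 ht.2))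
    (by apply Continuous.intervalIntegrable; fun_prop)
  rw [intervalIntegral.integral_mul_const] at hint
  simp only [zero_mul, add_zero, one_mul] at hint
  rw [show a + (b - a) = b by ring] at hint
  rw [← hint, segMean, mul_comm]

theorem segMean_sub_le {R : ℝ} {ψ : ℝ → ℝ} (hψ : Continuous ψ) {a b c m : ℝ}
    (ha : a ∈ Icc 0 R) (hb : b ∈ Icc 0 R)
    (h : ∀ r ∈ Icc 0 R, |r - a| ≤ |b - a| → |c - ψ r| ≤ m) : |c - segMean ψ a b| ≤ m := by
  have : c - segMean ψ a b = ∫ t in (0:ℝ)..1, (c - ψ (a + t * (b - a))) := by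
    rw [intervalIntegral.integral_sub (by simp)
      (by apply Continuous.intervalIntegrable; fun_prop)]
    simp [segMean]
  rw [this]
  have := intervalIntegral.norm_integral_le_of_norm_le_const (a := (0:ℝ)) (b := 1)
    (f := fun t => c - ψ (a + t * (b - a))) (C := m) (by
      intro t ht
      rw [uIoc_of_le zero_le_one] at ht
      refine h _ (segment_mem_Icc ha hb ⟨ht.1.le, ht.2⟩) ?_
      rw [add_sub_cancel_left, abs_mul, abs_of_pos ht.1]
      exact mul_le_of_le_one_left (abs_nonneg _) ht.2)
  simpa using this

theorem hasDerivWithinAt_of_sub_eq_mul {φ K : ℝ → ℝ} {s : Set ℝ} {r : ℝ}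
    (h : ∀ r' ∈ s, φ r' - φ r = (r' - r) * K r') (hK : ContinuousWithinAt K s r) :
    HasDerivWithinAt φ (K r) s r := by
  rw [hasDerivWithinAt_iff_tendsto_slope]
  have h1 : Filter.Tendsto K (nhdsWithin r (s \ {r})) (nhds (K r)) :=
    hK.tendsto.mono_left (nhdsWithin_mono _ sdiff_subset)
  refine h1.congr' ?_
  filter_upwards [self_mem_nhdsWithin] with r' hr'
  have : r' - r ≠ 0 := sub_ne_zero.2 hr'.2
  rw [slope_def_field, h r' hr'.1]
  field_simp

theorem hasDerivWithinAt_Icc_of_Ioo {R : ℝ} {φ ψ : ℝ → ℝ} (hφ : Continuous φ)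
    (hψ : Continuous ψ) (h : ∀ r ∈ Ioo 0 R, HasDerivAt φ (ψ r) r) :
    ∀ r ∈ Icc 0 R, HasDerivWithinAt φ (ψ r) (Icc 0 R) r := by
  intro r hr
  have key : ∀ x ∈ Icc 0 R, φ x = φ 0 + ∫ s in (0:ℝ)..x, ψ s := by
    intro x hx
    rw [intervalIntegral.integral_eq_sub_of_hasDerivAt_of_le hx.1 hφ.continuousOn
      (fun t ht => h t ⟨ht.1, ht.2.trans_le hx.2⟩) (hψ.intervalIntegrable _ _)]
    ring
  have hd : HasDerivAt (fun x => φ 0 + ∫ s in (0:ℝ)..x, ψ s) (ψ r) r :=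
    (hψ.integral_hasStrictDerivAt 0 r).hasDerivAt.const_add _
  exact hd.hasDerivWithinAt.congr key (key r hr)

theorem HasDerivWithinAt.Ici_of_Icc {y : ℝ → ℝ} {y' u s : ℝ} (hs : s ∈ Ico 0 u)
    (h : HasDerivWithinAt y y' (Icc 0 u) s) : HasDerivWithinAt y y' (Ici s) s :=
  h.mono_of_mem_nhdsWithin (Icc_mem_nhdsGE_of_mem hs)

theorem eq_mul_exp_of_hasDerivWithinAt {y a : ℝ → ℝ} {u : ℝ} (ha : Continuous a)
    (h : ∀ s ∈ Icc 0 u, HasDerivWithinAt y (a s * y s) (Icc 0 u) s) {s : ℝ} (hs : s ∈ Icc 0 u) :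
    y s = y u * Real.exp ((∫ σ in (0:ℝ)..s, a σ) - ∫ σ in (0:ℝ)..u, a σ) := by
  set Γ : ℝ → ℝ := fun s => ∫ σ in (0:ℝ)..s, a σ with hΓ
  have hΓd : ∀ s, HasDerivAt Γ (a s) s := fun s => (ha.integral_hasStrictDerivAt 0 s).hasDerivAt
  have hz : ∀ s ∈ Icc 0 u, HasDerivWithinAt (fun s => y s * Real.exp (- Γ s)) 0 (Icc 0 u) s := by
    intro s hs
    refine ((h s hs).mul ((hΓd s).neg.exp.hasDerivWithinAt (s := Icc 0 u))).congr_deriv ?_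
    simp only [Pi.neg_apply]
    ring
  have hc := constant_of_has_deriv_right_zero (fun s hs => (hz s hs).continuousWithinAt)
    (fun s hs => (hz s ⟨hs.1, hs.2.le⟩).Ici_of_Icc hs)
  have e1 := hc s hs
  have e2 := hc u ⟨hs.1.trans hs.2, le_rfl⟩
  have e3 : y s * Real.exp (- Γ s) = y u * Real.exp (- Γ u) := by rw [e1, ← e2]
  rw [sub_eq_add_neg, Real.exp_add]
  have : y s = y s * Real.exp (- Γ s) * Real.exp (Γ s) := by
    rw [mul_assoc, ← Real.exp_add]; simp
  rw [this, e3]; ring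

/-- Comparison principle for a damped linear scalar equation. -/
theorem abs_le_of_damped {y a b B B' : ℝ → ℝ} {u : ℝ} (hu : 0 ≤ u)
    (hy : ∀ s ∈ Icc 0 u, HasDerivWithinAt y (a s * y s + b s) (Icc 0 u) s)
    (ha : ∀ s ∈ Icc 0 u, a s ≤ 0) (hB : ∀ s ∈ Icc 0 u, HasDerivWithinAt B (B' s) (Icc 0 u) s)
    (hb : ∀ s ∈ Icc 0 u, a s * B s + |b s| ≤ B' s) (h0 : |y 0| ≤ B 0) : |y u| ≤ B u := by
  have main : ∀ (y b : ℝ → ℝ), (∀ s ∈ Icc 0 u, HasDerivWithinAt y (a s * y s + b s) (Icc 0 u) s) →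
      (∀ s ∈ Icc 0 u, a s * B s + |b s| ≤ B' s) → |y 0| ≤ B 0 → y u ≤ B u := by
    intro y b hy hb h0
    have step : ∀ ε > 0, y u ≤ B u + ε * (1 + u) := by
      intro ε hε
      have hBd : ∀ s ∈ Icc 0 u,
          HasDerivWithinAt (fun s => B s + ε * (1 + s)) (B' s + ε) (Icc 0 u) s := by
        intro s hs
        have h2 : HasDerivAt (fun s : ℝ => ε * (1 + s)) ε s := by
          simpa using ((hasDerivAt_id s).const_add 1).const_mul ε
        exact (hB s hs).add h2.hasDerivWithinAt
      refine image_le_of_deriv_right_lt_deriv_boundary' (a := 0) (b := u)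
        (f' := fun s => a s * y s + b s) (B := fun s => B s + ε * (1 + s))
        (B' := fun s => B' s + ε)
        (fun s hs => (hy s hs).continuousWithinAt)
        (fun s hs => (hy s ⟨hs.1, hs.2.le⟩).Ici_of_Icc hs)
        ?_ (fun s hs => (hBd s hs).continuousWithinAt)
        (fun s hs => (hBd s ⟨hs.1, hs.2.le⟩).Ici_of_Icc hs) ?_ ⟨hu, le_rfl⟩
      · have := le_abs_self (y 0)
        linarith
      · intro s hs e
        have hs' : s ∈ Icc 0 u := ⟨hs.1, hs.2.le⟩
        have h1 := hb s hs'
        have h2 := le_abs_self (b s)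
        have h3 : a s * (ε * (1 + s)) ≤ 0 :=
          mul_nonpos_of_nonpos_of_nonneg (ha s hs') (by have := hs.1; positivity)
        simp only [e]
        linarith
    by_contra! hlt
    have := step ((y u - B u) / (2 * (1 + u))) (by apply div_pos <;> linarith)
    have e : (y u - B u) / (2 * (1 + u)) * (1 + u) = (y u - B u) / 2 := by
      have : 1 + u ≠ 0 := by linarith
      field_simp
    linarith
  rw [abs_le]
  constructor
  · have := main (fun s => - y s) (fun s => - b s) (fun s hs =>
      (hy s hs).neg.congr_deriv (by ring)) (by simpa using hb) (by simpa using h0)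
    linarith
  · exact main y b hy hb h0

/-! ### Backward characteristics -/

/-- A transport velocity `F` on `[0, R]` with radial derivative `2 * G`, pointing outwards at both
ends of the interval and compressing along backward characteristics. -/
structure IsVelocity (R : ℝ) (F G : ℝ → ℝ → ℝ) : Prop where
  continuous_left : Continuous ↿F
  continuous_right : Continuous ↿G
  deriv : ∀ u, ∀ r ∈ Icc 0 R, HasDerivWithinAt (F u) (2 * G u r) (Icc 0 R) r
  nonpos : ∀ u, ∀ r ∈ Icc 0 R, G u r ≤ 0
  pos_zero : ∀ u, 0 < F u 0
  neg_right : ∀ u, F u R < 0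
  bounded : ∃ C, ∀ u, ∀ r ∈ Icc 0 R, |F u r| ≤ C ∧ |G u r| ≤ C

/-- `χ` is the backward characteristic `χ' = - F / 2` on `[0, u]`, frozen outside this interval. -/
structure IsChar (R : ℝ) (F : ℝ → ℝ → ℝ) (u : ℝ) (χ : ℝ → ℝ) : Prop where
  mem : ∀ s, χ s ∈ Icc 0 R
  deriv : ∀ s ∈ Icc 0 u, HasDerivWithinAt χ (-(F s (χ s) / 2)) (Icc 0 u) s
  frozen : ∀ s, χ (clampIcc u s) = χ s

section Characteristics

variable {R : ℝ} {F G : ℝ → ℝ → ℝ}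

theorem IsChar.continuous {u : ℝ} (hu : 0 ≤ u) {χ : ℝ → ℝ} (h : IsChar R F u χ) :
    Continuous χ := by
  have h1 : ContinuousOn χ (Icc 0 u) := fun s hs => (h.deriv s hs).continuousWithinAt
  have h2 := h1.comp_continuous (continuous_clampIcc u) (clampIcc_mem hu)
  exact h2.congr h.frozen

theorem IsChar.restrict {u τ : ℝ} {χ : ℝ → ℝ} (h : IsChar R F u χ) (hτ : τ ∈ Icc 0 u) :
    IsChar R F τ (fun s => χ (clampIcc τ s)) where
  mem s := h.mem _
  deriv s hs := by
    rw [clampIcc_of_mem hs]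
    refine ((h.deriv s ⟨hs.1, hs.2.trans hτ.2⟩).mono (Icc_subset_Icc_right hτ.2)).congr ?_ ?_
    · intro x hx; simp only [clampIcc_of_mem hx]
    · simp only [clampIcc_of_mem hs]
  frozen s := by rw [clampIcc_of_mem (clampIcc_mem hτ.1 s)]

theorem IsVelocity.sub_eq (hF : IsVelocity R F G) (s : ℝ) {a b : ℝ} (ha : a ∈ Icc 0 R)
    (hb : b ∈ Icc 0 R) : F s b - F s a = 2 * (b - a) * segMean (G s) a b := by
  have hG := hF.continuous_right
  rw [sub_eq_mul_segMean (hF.deriv s) (by fun_prop) ha hb]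
  simp only [segMean, intervalIntegral.integral_const_mul]
  ring

theorem IsChar.sub_eq (hF : IsVelocity R F G) {u : ℝ} (hu : 0 ≤ u) {χ₁ χ₂ : ℝ → ℝ}
    (h₁ : IsChar R F u χ₁) (h₂ : IsChar R F u χ₂) {s : ℝ} (hs : s ∈ Icc 0 u) :
    χ₁ s - χ₂ s = (χ₁ u - χ₂ u) *
      Real.exp ((∫ σ in (0:ℝ)..u, segMean (G σ) (χ₂ σ) (χ₁ σ))
        - ∫ σ in (0:ℝ)..s, segMean (G σ) (χ₂ σ) (χ₁ σ)) := by
  have c₁ := h₁.continuous hu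
  have c₂ := h₂.continuous hu
  have hG := hF.continuous_right
  have := eq_mul_exp_of_hasDerivWithinAt (y := fun s => χ₁ s - χ₂ s) (u := u)
    (a := fun σ => - segMean (G σ) (χ₂ σ) (χ₁ σ)) (by unfold segMean; fun_prop) (by
      intro s hs
      refine ((h₁.deriv s hs).sub (h₂.deriv s hs)).congr_deriv ?_
      have := hF.sub_eq s (h₂.mem s) (h₁.mem s)
      linear_combination (-1/2) * this) hs
  simp only [intervalIntegral.integral_neg] at this
  rw [this]
  congr 2
  ring

theorem segMean_nonpos (hF : IsVelocity R F G) (s : ℝ) {a b : ℝ} (ha : a ∈ Icc 0 R)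
    (hb : b ∈ Icc 0 R) : segMean (G s) a b ≤ 0 := by
  have hG := hF.continuous_right
  have := intervalIntegral.integral_mono_on (μ := MeasureTheory.volume) (a := (0:ℝ)) (b := 1)
    zero_le_one
    (f := fun t => G s (a + t * (b - a))) (g := fun _ => (0:ℝ))
    (by apply Continuous.intervalIntegrable; fun_prop) (by simp)
    (fun t ht => hF.nonpos s _ (segment_mem_Icc ha hb ht))
  simpa [segMean] using this

theorem IsChar.abs_sub_le (hF : IsVelocity R F G) {u : ℝ} (hu : 0 ≤ u) {χ₁ χ₂ : ℝ → ℝ}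
    (h₁ : IsChar R F u χ₁) (h₂ : IsChar R F u χ₂) (s : ℝ) :
    |χ₁ s - χ₂ s| ≤ |χ₁ u - χ₂ u| := by
  rw [← h₁.frozen s, ← h₂.frozen s]
  have hs := clampIcc_mem hu s
  set σ := clampIcc u s
  have c₁ := h₁.continuous hu
  have c₂ := h₂.continuous hu
  have hG := hF.continuous_right
  have hint : ∀ a b : ℝ, IntervalIntegrable (fun σ => segMean (G σ) (χ₂ σ) (χ₁ σ))
      MeasureTheory.volume a b := fun a b => by
    apply Continuous.intervalIntegrable; unfold segMean; fun_prop
  rw [h₁.sub_eq hF hu h₂ hs, abs_mul, Real.abs_exp]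
  refine mul_le_of_le_one_right (abs_nonneg _) ?_
  rw [Real.exp_le_one_iff, intervalIntegral.integral_interval_sub_left (hint _ _) (hint _ _)]
  have := intervalIntegral.integral_mono_on hs.2 (hint σ u)
    (g := fun _ => (0:ℝ)) (by simp) (fun τ _ => segMean_nonpos hF τ (h₂.mem τ) (h₁.mem τ))
  simpa using this

theorem IsChar.eq (hF : IsVelocity R F G) {u : ℝ} (hu : 0 ≤ u) {χ₁ χ₂ : ℝ → ℝ}
    (h₁ : IsChar R F u χ₁) (h₂ : IsChar R F u χ₂) (h : χ₁ u = χ₂ u) : χ₁ = χ₂ := by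
  funext s
  have := h₁.abs_sub_le hF hu h₂ s
  rw [h, sub_self, abs_zero] at this
  exact sub_eq_zero.1 (abs_nonpos_iff.1 this)

theorem IsChar.lipschitz {C : ℝ} (hC : ∀ u, ∀ r ∈ Icc 0 R, |F u r| ≤ C) {u : ℝ} (hu : 0 ≤ u)
    {χ : ℝ → ℝ} (h : IsChar R F u χ) (s s' : ℝ) : |χ s - χ s'| ≤ C * |s - s'| := by
  have hC0 : 0 ≤ C := (abs_nonneg _).trans (hC 0 _ (h.mem 0))
  rw [← h.frozen s, ← h.frozen s']
  have := (convex_Icc (0:ℝ) u).norm_image_sub_le_of_norm_hasDerivWithin_le (f := χ) (C := C)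
    h.deriv (fun τ hτ => ?_) (clampIcc_mem hu s') (clampIcc_mem hu s)
  · rw [Real.norm_eq_abs, Real.norm_eq_abs] at this
    exact this.trans (mul_le_mul_of_nonneg_left (abs_clampIcc_sub_le _ _ _) hC0)
  · rw [norm_neg, Real.norm_eq_abs, abs_div, abs_two]
    have := hC τ _ (h.mem τ)
    linarith

theorem exists_isChar (hR : 0 ≤ R) (hF : IsVelocity R F G) {u r : ℝ} (hu : 0 ≤ u)
    (hr : r ∈ Icc 0 R) : ∃ χ, IsChar R F u χ ∧ χ u = r := by
  obtain ⟨C, hC⟩ := hF.bounded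
  have hFc := hF.continuous_left
  have hGc := hF.continuous_right
  have hC0 : 0 ≤ C := (abs_nonneg _).trans (hC 0 r hr).1
  have hlip : ∀ t a b, |F t (clampIcc R a) - F t (clampIcc R b)| ≤ 2 * C * |a - b| := by
    intro t a b
    have h1 := clampIcc_mem hR a
    have h2 := clampIcc_mem hR b
    rw [hF.sub_eq t h2 h1, abs_mul, abs_mul, abs_two]
    have h3 := segMean_sub_le (R := R) (ψ := G t) (by fun_prop) (c := 0) (m := C) h2 h1
      (fun x hx _ => by simpa using (hC t x hx).2)
    rw [zero_sub, abs_neg] at h3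
    have h4 := abs_clampIcc_sub_le R a b
    calc 2 * |clampIcc R a - clampIcc R b| * |segMean (G t) (clampIcc R b) (clampIcc R a)|
        ≤ 2 * |a - b| * C := by gcongr
      _ = _ := by ring
  have hPL : IsPicardLindelof (fun t x => -(F t (clampIcc R x) / 2)) (tmin := 0) (tmax := u)
      ⟨u, hu, le_rfl⟩ r (C * u).toNNReal 0 C.toNNReal (2 * C).toNNReal := by
    constructor
    · intro t _
      refine LipschitzOnWith.of_dist_le_mul fun x _ y _ => ?_
      rw [Real.dist_eq, Real.dist_eq, Real.coe_toNNReal _ (by positivity)]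
      have := hlip t x y
      rw [show -(F t (clampIcc R x) / 2) - -(F t (clampIcc R y) / 2)
        = -((F t (clampIcc R x) - F t (clampIcc R y)) / 2) by ring, abs_neg, abs_div, abs_two]
      have := abs_nonneg (F t (clampIcc R x) - F t (clampIcc R y))
      linarith
    · intro x _
      apply Continuous.continuousOn
      fun_prop
    · intro t _ x _
      rw [norm_neg, Real.norm_eq_abs, abs_div, abs_two, Real.coe_toNNReal _ hC0]
      have := (hC t _ (clampIcc_mem hR x)).1
      linarith
    · rw [Real.coe_toNNReal _ hC0, Real.coe_toNNReal _ (by positivity)]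
      simp [hu]
  obtain ⟨α, hα0, hα⟩ := hPL.exists_eq_forall_mem_Icc_hasDerivWithinAt₀
  simp only at hα0
  have hy : ∀ σ ∈ Icc 0 u, HasDerivWithinAt (fun σ => α (u - σ))
      (F (u - σ) (clampIcc R (α (u - σ))) / 2) (Icc 0 u) σ := by
    intro σ hσ
    have h1 : HasDerivWithinAt (fun σ : ℝ => u - σ) (-1) (Icc 0 u) σ := by
      simpa using ((hasDerivAt_id σ).const_sub u).hasDerivWithinAt
    have h2 : MapsTo (fun σ : ℝ => u - σ) (Icc 0 u) (Icc 0 u) :=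
      fun x hx => ⟨by linarith [hx.2], by linarith [hx.1]⟩
    exact ((hα (u - σ) (h2 hσ)).comp σ h1 h2).congr_deriv (by ring)
  have hup : ∀ σ ∈ Icc 0 u, α (u - σ) ≤ R := by
    refine image_le_of_deriv_right_lt_deriv_boundary (B := fun _ => R) (B' := fun _ => 0)
      (fun σ hσ => (hy σ hσ).continuousWithinAt)
      (fun σ hσ => (hy σ ⟨hσ.1, hσ.2.le⟩).Ici_of_Icc hσ) (by simpa [hα0] using hr.2)
      (fun _ => hasDerivAt_const _ _) ?_
    intro σ _ e
    rw [e, clampIcc_of_mem ⟨hR, le_rfl⟩]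
    linarith [hF.neg_right (u - σ)]
  have hlo : ∀ σ ∈ Icc 0 u, -α (u - σ) ≤ 0 := by
    refine image_le_of_deriv_right_lt_deriv_boundary (B := fun _ => 0) (B' := fun _ => 0)
      (fun σ hσ => (hy σ hσ).neg.continuousWithinAt)
      (fun σ hσ => (hy σ ⟨hσ.1, hσ.2.le⟩).neg.Ici_of_Icc hσ) (by simpa [hα0] using hr.1)
      (fun _ => hasDerivAt_const _ _) ?_
    intro σ _ e
    have e' : α (u - σ) = 0 := neg_eq_zero.1 e
    rw [e', clampIcc_of_mem ⟨le_rfl, hR⟩]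
    linarith [hF.pos_zero (u - σ)]
  have hmem : ∀ s ∈ Icc 0 u, α s ∈ Icc 0 R := by
    intro s hs
    have h1 : u - s ∈ Icc 0 u := ⟨by linarith [hs.2], by linarith [hs.1]⟩
    have a1 := hup _ h1
    have a2 := hlo _ h1
    rw [sub_sub_cancel] at a1 a2
    exact ⟨by linarith, a1⟩
  refine ⟨fun s => α (clampIcc u s), ⟨fun s => hmem _ (clampIcc_mem hu s), ?_, ?_⟩, ?_⟩
  · intro s hs
    have := hα s hs
    rw [clampIcc_of_mem (hmem s hs)] at this
    rw [clampIcc_of_mem hs]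
    refine this.congr ?_ ?_
    · intro x hx; simp only [clampIcc_of_mem hx]
    · simp only [clampIcc_of_mem hs]
  · intro s
    rw [clampIcc_of_mem (clampIcc_mem hu s)]
  · change α (clampIcc u u) = r
    rw [clampIcc_of_mem ⟨hu, le_rfl⟩, hα0]

/-- The backward flow of a velocity: `X u r s` is the position at time `s` of the characteristic
through `r` at time `u`. -/
structure IsFlow (R : ℝ) (F : ℝ → ℝ → ℝ) (X : ℝ → ℝ → ℝ → ℝ) : Prop where
  continuous : Continuous ↿X
  isChar : ∀ u, 0 ≤ u → ∀ r, IsChar R F u (X u r)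
  self : ∀ u, 0 ≤ u → ∀ r ∈ Icc 0 R, X u r u = r

theorem exists_isFlow (hR : 0 ≤ R) (hF : IsVelocity R F G) : ∃ X, IsFlow R F X := by
  obtain ⟨C, hC⟩ := hF.bounded
  replace hC := fun u r hr => (hC u r hr).1
  have hC0 : 0 ≤ C := (abs_nonneg _).trans (hC 0 0 ⟨le_rfl, hR⟩)
  have key : ∀ u r : ℝ, ∃ χ, IsChar R F (max u 0) χ ∧ χ (max u 0) = clampIcc R r :=
    fun u r => exists_isChar hR hF (le_max_right _ _) (clampIcc_mem hR r)
  choose X hX hself using key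
  have aux : ∀ u u' r r' s, max u 0 ≤ max u' 0 →
      |X u' r' s - X u r s| ≤ C * |u' - u| + |r' - r| := by
    intro u u' r r' s huu
    have hm : |max u' 0 - max u 0| ≤ |u' - u| := by
      simpa using abs_max_sub_max_le_max u' 0 u 0
    have hrr := abs_clampIcc_sub_le R r' r
    have hb : |X u' r' (max u 0) - clampIcc R r'| ≤ C * |u' - u| := by
      rw [← hself u' r', abs_sub_comm]
      exact ((hX u' r').lipschitz hC (le_max_right _ _) _ _).trans
        (mul_le_mul_of_nonneg_left hm hC0)
    rcases le_total s (max u 0) with hs | hs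
    · have hres := (hX u' r').restrict (τ := max u 0) ⟨le_max_right _ _, huu⟩
      have h1 := hres.abs_sub_le hF (le_max_right _ _) (hX u r) s
      have e1 : X u' r' (clampIcc (max u 0) s) = X u' r' s := by
        rw [← (hX u' r').frozen s, ← (hX u' r').frozen (clampIcc _ _)]
        congr 1
        unfold clampIcc
        rw [min_eq_left hs, min_eq_left (hs.trans huu), min_eq_left]
        · simp
        · exact max_le (le_max_right _ _) (hs.trans huu)
      rw [clampIcc_of_mem (R := max u 0) ⟨le_max_right _ _, le_rfl⟩, hself, e1] at h1
      refine h1.trans ?_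
      calc |X u' r' (max u 0) - clampIcc R r|
          ≤ |X u' r' (max u 0) - clampIcc R r'| + |clampIcc R r' - clampIcc R r| :=
            abs_sub_le _ _ _
        _ ≤ _ := add_le_add hb hrr
    · have e1 : X u r s = clampIcc R r := by
        rw [← (hX u r).frozen s, ← hself u r]
        congr 1
        unfold clampIcc
        rw [min_eq_right hs, max_eq_right (le_max_right _ _)]
      have h2 : |X u' r' s - clampIcc R r'| ≤ C * |u' - u| := by
        rw [← hself u' r']
        rw [← (hX u' r').frozen s]
        refine ((hX u' r').lipschitz hC (le_max_right _ _) _ _).trans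
          (mul_le_mul_of_nonneg_left ?_ hC0)
        refine le_trans ?_ hm
        rw [abs_sub_comm]
        have a1 : max u 0 ≤ clampIcc (max u' 0) s := le_max_of_le_right (le_min hs huu)
        have a2 : clampIcc (max u' 0) s ≤ max u' 0 := (clampIcc_mem (le_max_right _ _) s).2
        rw [abs_of_nonneg (by linarith), abs_of_nonneg (by linarith)]
        linarith
      rw [e1]
      calc |X u' r' s - clampIcc R r|
          ≤ |X u' r' s - clampIcc R r'| + |clampIcc R r' - clampIcc R r| := abs_sub_le _ _ _
        _ ≤ _ := add_le_add h2 hrr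
  have hlip : ∀ u u' r r' s s', |X u' r' s' - X u r s| ≤ C * |u' - u| + |r' - r| + C * |s' - s| := by
    intro u u' r r' s s'
    have h1 : |X u' r' s' - X u' r' s| ≤ C * |s' - s| :=
      (hX u' r').lipschitz hC (le_max_right _ _) _ _
    have h2 : |X u' r' s - X u r s| ≤ C * |u' - u| + |r' - r| := by
      rcases le_total (max u 0) (max u' 0) with h | h
      · exact aux _ _ _ _ _ h
      · rw [abs_sub_comm, abs_sub_comm u', abs_sub_comm r']
        exact aux _ _ _ _ _ h
    linarith [abs_sub_le (X u' r' s') (X u' r' s) (X u r s)]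
  refine ⟨X, ?_, ?_, ?_⟩
  · rw [continuous_iff_continuousAt]
    rintro ⟨u, r, s⟩
    rw [ContinuousAt, tendsto_iff_dist_tendsto_zero]
    refine squeeze_zero (g := fun p : ℝ × ℝ × ℝ => C * |p.1 - u| + |p.2.1 - r| + C * |p.2.2 - s|)
      (fun _ => dist_nonneg) (fun p => hlip u p.1 r p.2.1 s p.2.2) ?_
    have : Continuous fun p : ℝ × ℝ × ℝ => C * |p.1 - u| + |p.2.1 - r| + C * |p.2.2 - s| := by
      fun_prop
    simpa using this.tendsto (u, r, s)
  · intro u hu r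
    have := hX u r
    rwa [max_eq_left hu] at this
  · intro u hu r hr
    have := hself u r
    rwa [max_eq_left hu, clampIcc_of_mem hr] at this

theorem IsFlow.semigroup {X : ℝ → ℝ → ℝ → ℝ} (hX : IsFlow R F X) (hF : IsVelocity R F G)
    {u r τ s : ℝ} (hτ : τ ∈ Icc 0 u) (hs : s ∈ Icc 0 τ) :
    X τ (X u r τ) s = X u r s := by
  have h1 := hX.isChar u (hτ.1.trans hτ.2) r
  have h2 := h1.restrict hτ
  have h3 := (hX.isChar τ hτ.1 (X u r τ)).eq hF hτ.1 h2 (by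
    rw [hX.self τ hτ.1 _ (h1.mem τ), clampIcc_of_mem ⟨hτ.1, le_rfl⟩])
  rw [h3]
  change X u r (clampIcc τ s) = _
  rw [clampIcc_of_mem hs]

end Characteristics

/-! ### Linear transport -/

/-- `h` is a `C¹` solution of `∂ᵤ h = F / 2 * ∂ᵣ h + S` on `[0, ∞) × [0, R]` with `∂ᵣ h = v`. -/
structure IsTransport (R : ℝ) (F S h v : ℝ → ℝ → ℝ) : Prop where
  continuous : Continuous ↿h
  continuous_deriv : Continuous ↿v
  deriv_right : ∀ u, 0 ≤ u → ∀ r ∈ Icc 0 R, HasDerivWithinAt (h u) (v u r) (Icc 0 R) r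
  deriv_left : ∀ u, 0 ≤ u → ∀ r ∈ Icc 0 R,
    HasDerivWithinAt (fun u' => h u' r) (F u r / 2 * v u r + S u r) (Ici 0) u

/-- The equation satisfied by the radial derivative along backward characteristics. -/
def IsDerivTransport (R : ℝ) (G Y : ℝ → ℝ → ℝ) (X : ℝ → ℝ → ℝ → ℝ) (v : ℝ → ℝ → ℝ) : Prop :=
  ∀ u, 0 ≤ u → ∀ r ∈ Icc 0 R, ∀ s ∈ Icc 0 u, HasDerivWithinAt (fun s => v s (X u r s))
    (G s (X u r s) * v s (X u r s) + Y s (X u r s)) (Icc 0 u) s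

section Transport

variable {R : ℝ} {F G S Y : ℝ → ℝ → ℝ} {X : ℝ → ℝ → ℝ → ℝ}

theorem integral_eq_mul_segMean {g : ℝ → ℝ} (hg : Continuous g) {a b : ℝ} :
    ∫ s in a..b, g s = (b - a) * segMean g a b := by
  unfold segMean
  have := intervalIntegral.integral_comp_mul_deriv (a := (0:ℝ)) (b := 1)
    (f := fun t => a + t * (b - a)) (f' := fun _ => b - a) (g := g)
    (fun t _ => by simpa using ((hasDerivAt_id t).mul_const (b - a)).const_add a)
    (by fun_prop) hg
  simp only [Function.comp, zero_mul, add_zero, one_mul, add_sub_cancel,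
    intervalIntegral.integral_mul_const] at this
  rw [← this, mul_comm]

theorem hasDerivWithinAt_charIntegral_right (hF : IsVelocity R F G) (hX : IsFlow R F X)
    (hY : Continuous ↿Y) (hS : Continuous ↿S)
    (hSY : ∀ u, ∀ r ∈ Icc 0 R, HasDerivWithinAt (S u) (Y u r) (Icc 0 R) r)
    {h₀ v₀ : ℝ → ℝ} (hv₀ : Continuous v₀)
    (hhv : ∀ r ∈ Icc 0 R, HasDerivWithinAt h₀ (v₀ r) (Icc 0 R) r)
    {u : ℝ} (hu : 0 ≤ u) {r : ℝ} (hr : r ∈ Icc 0 R) :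
    HasDerivWithinAt (fun r => h₀ (X u r 0) + ∫ s in (0:ℝ)..u, S s (X u r s))
      (v₀ (X u r 0) * Real.exp (∫ σ in (0:ℝ)..u, G σ (X u r σ)) +
        ∫ s in (0:ℝ)..u, Real.exp ((∫ σ in (0:ℝ)..u, G σ (X u r σ)) -
          ∫ σ in (0:ℝ)..s, G σ (X u r σ)) * Y s (X u r s)) (Icc 0 R) r := by
  have hXc := hX.continuous
  have hGc := hF.continuous_right
  set E : ℝ → ℝ → ℝ := fun r' s => Real.exp ((∫ σ in (0:ℝ)..u, segMean (G σ) (X u r σ) (X u r' σ))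
        - ∫ σ in (0:ℝ)..s, segMean (G σ) (X u r σ) (X u r' σ)) with hE
  have hEc : Continuous ↿E := by rw [hE]; unfold segMean; fun_prop
  have hsub : ∀ r' ∈ Icc 0 R, ∀ s ∈ Icc 0 u, X u r' s - X u r s = (r' - r) * E r' s := by
    intro r' hr' s hs
    rw [(hX.isChar u hu r').sub_eq hF hu (hX.isChar u hu r) hs, hX.self u hu r hr,
      hX.self u hu r' hr']
  have := hasDerivWithinAt_of_sub_eq_mul (s := Icc 0 R) (r := r)
    (φ := fun r => h₀ (X u r 0) + ∫ s in (0:ℝ)..u, S s (X u r s))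
    (K := fun r' => E r' 0 * segMean v₀ (X u r 0) (X u r' 0) +
      ∫ s in (0:ℝ)..u, E r' s * segMean (Y s) (X u r s) (X u r' s)) ?_ ?_
  · refine this.congr_deriv ?_
    simp only [hE, segMean_self, intervalIntegral.integral_same, sub_zero]
    rw [mul_comm (Real.exp _) (v₀ _)]
  · intro r' hr'
    have e1 := sub_eq_mul_segMean hhv hv₀ ((hX.isChar u hu r).mem 0) ((hX.isChar u hu r').mem 0)
    rw [hsub r' hr' 0 ⟨le_rfl, hu⟩] at e1
    have e2 : (∫ s in (0:ℝ)..u, S s (X u r' s)) - (∫ s in (0:ℝ)..u, S s (X u r s)) =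
        (r' - r) * ∫ s in (0:ℝ)..u, E r' s * segMean (Y s) (X u r s) (X u r' s) := by
      rw [← intervalIntegral.integral_sub (by apply Continuous.intervalIntegrable; fun_prop)
        (by apply Continuous.intervalIntegrable; fun_prop),
        ← intervalIntegral.integral_const_mul]
      refine intervalIntegral.integral_congr fun s hs => ?_
      rw [uIcc_of_le hu] at hs
      rw [sub_eq_mul_segMean (hSY s) (by fun_prop) ((hX.isChar u hu r).mem s)
        ((hX.isChar u hu r').mem s), hsub r' hr' s hs]
      ring
    linear_combination e1 + e2
  · apply Continuous.continuousWithinAt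
    unfold segMean
    fun_prop

theorem hasDerivWithinAt_charIntegral_left (hF : IsVelocity R F G) (hX : IsFlow R F X)
    (hS : Continuous ↿S) {h₀ : ℝ → ℝ} {h v : ℝ → ℝ → ℝ}
    (hh : ∀ u r, h u r = h₀ (X u r 0) + ∫ s in (0:ℝ)..u, S s (X u r s)) (hv : Continuous ↿v)
    (hhv : ∀ u, 0 ≤ u → ∀ r ∈ Icc 0 R, HasDerivWithinAt (h u) (v u r) (Icc 0 R) r)
    {u : ℝ} (hu : 0 ≤ u) {r : ℝ} (hr : r ∈ Icc 0 R) :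
    HasDerivWithinAt (fun u' => h u' r) (F u r / 2 * v u r + S u r) (Ici 0) u := by
  have hXc := hX.continuous
  have hFc := hF.continuous_left
  set K : ℝ → ℝ → ℝ := fun u₁ u₂ =>
    segMean (fun s => F s (X u₂ r s) / 2) u₁ u₂ * segMean (v u₁) r (X u₂ r u₁) +
      segMean (fun s => S s (X u₂ r s)) u₁ u₂ with hK
  have hKc : Continuous ↿K := by rw [hK]; unfold segMean; fun_prop
  have key : ∀ u₁ u₂, 0 ≤ u₁ → u₁ ≤ u₂ → h u₂ r - h u₁ r = (u₂ - u₁) * K u₁ u₂ := by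
    intro u₁ u₂ h1 h2
    have h02 := h1.trans h2
    have hχ := hX.isChar u₂ h02 r
    have e1 : h u₂ r = h u₁ (X u₂ r u₁) + ∫ s in u₁..u₂, S s (X u₂ r s) := by
      rw [hh, hh, hX.semigroup hF ⟨h1, h2⟩ ⟨le_rfl, h1⟩, add_assoc]
      congr 1
      rw [← intervalIntegral.integral_add_adjacent_intervals (a := 0) (b := u₁) (c := u₂)
        (by apply Continuous.intervalIntegrable; fun_prop)
        (by apply Continuous.intervalIntegrable; fun_prop)]
      congr 1
      refine intervalIntegral.integral_congr fun s hs => ?_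
      rw [uIcc_of_le h1] at hs
      rw [hX.semigroup hF ⟨h1, h2⟩ hs]
    have e2 := sub_eq_mul_segMean (hhv u₁ h1) (by fun_prop) hr (hχ.mem u₁)
    have e3 := sub_eq_mul_segMean hχ.deriv (by fun_prop) (a := u₁) (b := u₂) ⟨h1, h2⟩ ⟨h02, le_rfl⟩
    rw [hX.self u₂ h02 r hr] at e3
    have e4 : segMean (fun s => -(F s (X u₂ r s) / 2)) u₁ u₂ =
        - segMean (fun s => F s (X u₂ r s) / 2) u₁ u₂ := by
      simp only [segMean, intervalIntegral.integral_neg]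
    rw [e4] at e3
    rw [integral_eq_mul_segMean (by fun_prop)] at e1
    rw [hK]
    linear_combination e1 + e2 - segMean (v u₁) r (X u₂ r u₁) * e3
  have := hasDerivWithinAt_of_sub_eq_mul (s := Ici 0) (r := u) (φ := fun u' => h u' r)
    (K := fun u' => K (min u' u) (max u' u)) ?_ ?_
  · refine this.congr_deriv ?_
    simp only [hK, min_self, max_self, segMean_self, hX.self u hu r hr]
  · intro u' hu'
    rcases le_total u' u with hle | hle
    · rw [min_eq_left hle, max_eq_right hle]
      linear_combination - key u' u hu' hle
    · rw [min_eq_right hle, max_eq_left hle]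
      exact key u u' hu hle
  · apply Continuous.continuousWithinAt
    fun_prop

theorem exists_isTransport (hF : IsVelocity R F G) (hX : IsFlow R F X) (hS : Continuous ↿S)
    (hY : Continuous ↿Y) (hSY : ∀ u, ∀ r ∈ Icc 0 R, HasDerivWithinAt (S u) (Y u r) (Icc 0 R) r)
    {h₀ v₀ : ℝ → ℝ} (hh₀ : Continuous h₀) (hv₀ : Continuous v₀)
    (hhv : ∀ r ∈ Icc 0 R, HasDerivWithinAt h₀ (v₀ r) (Icc 0 R) r) :
    ∃ h v, IsTransport R F S h v ∧ (∀ r ∈ Icc 0 R, h 0 r = h₀ r) ∧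
      (∀ r ∈ Icc 0 R, v 0 r = v₀ r) ∧ IsDerivTransport R G Y X v := by
  have hXc := hX.continuous
  have hGc := hF.continuous_right
  set h : ℝ → ℝ → ℝ := fun u r => h₀ (X u r 0) + ∫ s in (0:ℝ)..u, S s (X u r s) with hh
  set v : ℝ → ℝ → ℝ := fun u r => v₀ (X u r 0) * Real.exp (∫ σ in (0:ℝ)..u, G σ (X u r σ)) +
        ∫ s in (0:ℝ)..u, Real.exp ((∫ σ in (0:ℝ)..u, G σ (X u r σ)) -
          ∫ σ in (0:ℝ)..s, G σ (X u r σ)) * Y s (X u r s) with hv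
  have hvc : Continuous ↿v := by rw [hv]; fun_prop
  have hd : ∀ u, 0 ≤ u → ∀ r ∈ Icc 0 R, HasDerivWithinAt (h u) (v u r) (Icc 0 R) r :=
    fun u hu r hr => hasDerivWithinAt_charIntegral_right hF hX hY hS hSY hv₀ hhv hu hr
  refine ⟨h, v, ⟨by rw [hh]; fun_prop, hvc, hd, fun u hu r hr =>
    hasDerivWithinAt_charIntegral_left hF hX hS (fun _ _ => rfl) hvc hd hu hr⟩, ?_, ?_, ?_⟩
  · intro r hr
    simp [hh, hX.self 0 le_rfl r hr]
  · intro r hr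
    simp [hv, hX.self 0 le_rfl r hr]
  · intro u hu r hr s hs
    set γ : ℝ → ℝ := fun s => ∫ σ in (0:ℝ)..s, G σ (X u r σ) with hγ
    have hγd : ∀ s, HasDerivAt γ (G s (X u r s)) s := fun s =>
      (Continuous.integral_hasStrictDerivAt (by fun_prop) 0 s).hasDerivAt
    set z : ℝ → ℝ := fun s => v₀ (X u r 0) + ∫ σ in (0:ℝ)..s, Real.exp (-γ σ) * Y σ (X u r σ)
      with hz
    have hγc : Continuous γ := by rw [hγ]; fun_prop
    have hzd : ∀ s, HasDerivAt z (Real.exp (-γ s) * Y s (X u r s)) s := fun s =>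
      (Continuous.integral_hasStrictDerivAt (by fun_prop) 0 s).hasDerivAt.const_add _
    have hvz : ∀ s ∈ Icc 0 u, v s (X u r s) = Real.exp (γ s) * z s := by
      intro s hs
      have hsg : ∀ t ∈ Icc 0 s, ∫ σ in (0:ℝ)..t, G σ (X s (X u r s) σ) = γ t := by
        intro t ht
        refine intervalIntegral.integral_congr fun σ hσ => ?_
        rw [uIcc_of_le ht.1] at hσ
        rw [hX.semigroup hF hs ⟨hσ.1, hσ.2.trans ht.2⟩]
      simp only [hv, hz]
      rw [hsg s ⟨hs.1, le_rfl⟩, hX.semigroup hF hs ⟨le_rfl, hs.1⟩, mul_add,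
        ← intervalIntegral.integral_const_mul, mul_comm (v₀ _)]
      congr 1
      refine intervalIntegral.integral_congr fun σ hσ => ?_
      rw [uIcc_of_le hs.1] at hσ
      rw [hsg σ hσ, hX.semigroup hF hs hσ, sub_eq_add_neg, Real.exp_add, mul_assoc]
    refine (((hγd s).exp.mul (hzd s)).hasDerivWithinAt.congr hvz (hvz s hs)).congr_deriv ?_
    rw [hvz s hs]
    have : Real.exp (γ s) * Real.exp (-γ s) = 1 := by rw [← Real.exp_add]; simp
    linear_combination (Y s (X u r s)) * this

end Transport

/-! ### Stability of transport equations -/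

theorem HasDerivWithinAt.sub_mul_of_continuousWithinAt {χ K : ℝ → ℝ} {χ' x : ℝ} {s : Set ℝ}
    (hχ : HasDerivWithinAt χ χ' s x) (hK : ContinuousWithinAt K s x) :
    HasDerivWithinAt (fun y => (χ y - χ x) * K y) (χ' * K x) s x := by
  rw [hasDerivWithinAt_iff_tendsto_slope] at hχ ⊢
  have h1 : Filter.Tendsto K (nhdsWithin x (s \ {x})) (nhds (K x)) :=
    hK.tendsto.mono_left (nhdsWithin_mono _ sdiff_subset)
  refine (hχ.mul h1).congr fun y => ?_
  simp only [slope_def_field, sub_self, zero_mul, sub_zero]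
  ring

section Stability

variable {R : ℝ} {F S h v : ℝ → ℝ → ℝ}

theorem IsTransport.hasDerivWithinAt_comp (hh : IsTransport R F S h v) {u s χ' : ℝ} {χ : ℝ → ℝ}
    (hχ : HasDerivWithinAt χ χ' (Icc 0 u) s) (hmem : ∀ s ∈ Icc 0 u, χ s ∈ Icc 0 R)
    (hs : s ∈ Icc 0 u) :
    HasDerivWithinAt (fun s => h s (χ s))
      ((F s (χ s) / 2 + χ') * v s (χ s) + S s (χ s)) (Icc 0 u) s := by
  have hv := hh.continuous_deriv
  have hχc := hχ.continuousWithinAt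
  have hK : ContinuousWithinAt (fun s' => segMean (v s') (χ s) (χ s')) (Icc 0 u) s := by
    have : Continuous fun p : ℝ × ℝ => segMean (v p.1) (χ s) p.2 := by unfold segMean; fun_prop
    exact this.continuousAt.comp_continuousWithinAt (continuousWithinAt_id.prodMk hχc)
  have h1 := hχ.sub_mul_of_continuousWithinAt hK
  have h2 := (hh.deriv_left s hs.1 _ (hmem s hs)).mono (Icc_subset_Ici_self : Icc 0 u ⊆ Ici 0)
  have key : ∀ s' ∈ Icc 0 u, h s' (χ s') =
      (χ s' - χ s) * segMean (v s') (χ s) (χ s') + h s' (χ s) := fun s' hs' => by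
    rw [← sub_eq_mul_segMean (hh.deriv_right s' hs'.1) (by fun_prop) (hmem s hs) (hmem s' hs')]
    ring
  refine ((h1.add h2).congr key (key s hs)).congr_deriv ?_
  rw [segMean_self]
  ring

theorem IsTransport.comp_char (hh : IsTransport R F S h v) {u s : ℝ} {χ : ℝ → ℝ}
    (hχ : IsChar R F u χ) (hs : s ∈ Icc 0 u) :
    HasDerivWithinAt (fun s => h s (χ s)) (S s (χ s)) (Icc 0 u) s :=
  (hh.hasDerivWithinAt_comp (hχ.deriv s hs) (fun s _ => hχ.mem s) hs).congr_deriv (by ring)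

/-- Stability of solutions of transport equations in a weighted supremum norm. -/
theorem IsTransport.abs_sub_le {F' S' h' v' : ℝ → ℝ → ℝ} (hh : IsTransport R F S h v)
    (hh' : IsTransport R F' S' h' v') {X : ℝ → ℝ → ℝ → ℝ} (hX : IsFlow R F X)
    (h0 : ∀ r ∈ Icc 0 R, h 0 r = h' 0 r) {C M u : ℝ} (hM : 0 ≤ M) (hu : 0 ≤ u)
    (hb : ∀ s ∈ Icc 0 u, ∀ r ∈ Icc 0 R,
      |(F s r - F' s r) / 2 * v' s r + (S s r - S' s r)| ≤ C * M * Real.exp (2 * C * s))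
    {r : ℝ} (hr : r ∈ Icc 0 R) : |h u r - h' u r| ≤ M / 2 * Real.exp (2 * C * u) := by
  have hχ := hX.isChar u hu r
  have := abs_le_of_damped (y := fun s => h s (X u r s) - h' s (X u r s)) (a := fun _ => 0)
    (b := fun s => (F s (X u r s) - F' s (X u r s)) / 2 * v' s (X u r s) +
      (S s (X u r s) - S' s (X u r s))) (B := fun s => M / 2 * Real.exp (2 * C * s))
    (B' := fun s => C * M * Real.exp (2 * C * s)) hu (fun s hs => ?_) (fun _ _ => le_rfl)
    (fun s _ => ?_) (fun s hs => ?_) ?_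
  · simpa only [hX.self u hu r hr] using this
  · refine ((hh.comp_char hχ hs).sub (hh'.hasDerivWithinAt_comp (hχ.deriv s hs)
      (fun s _ => hχ.mem s) hs)).congr_deriv ?_
    ring
  · have h1 : HasDerivAt (fun s : ℝ => 2 * C * s) (2 * C) s := by
      simpa using (hasDerivAt_id s).const_mul (2 * C)
    exact ((h1.exp.const_mul (M / 2)).congr_deriv (by ring)).hasDerivWithinAt
  · simpa using hb s hs _ (hχ.mem s)
  · rw [h0 _ (hχ.mem 0)]
    simp
    positivity

end Stability

/-! ### Quasilinear transport equations -/

theorem exists_abs_le_of_continuous {Φ : ℝ → ℝ → ℝ} (hΦ : Continuous ↿Φ) (R T : ℝ) :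
    ∃ M, 0 ≤ M ∧ ∀ s ∈ Icc 0 T, ∀ r ∈ Icc 0 R, |Φ s r| ≤ M := by
  obtain ⟨M, hM⟩ := (isCompact_Icc.prod isCompact_Icc :
    IsCompact (Icc 0 T ×ˢ Icc 0 R)).exists_bound_of_continuousOn hΦ.continuousOn
  exact ⟨max M 0, le_max_right _ _, fun s hs r hr => (hM (s, r) ⟨hs, hr⟩).trans (le_max_left _ _)⟩

theorem exists_limit_of_uniformCauchy {R : ℝ} (hR : 0 ≤ R) {Φ : ℕ → ℝ → ℝ → ℝ}
    (hΦ : ∀ n, Continuous ↿(Φ n))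
    (h : ∀ T, ∀ ε > 0, ∃ N, ∀ m ≥ N, ∀ n ≥ N, ∀ s ∈ Icc 0 T, ∀ r ∈ Icc 0 R,
      |Φ m s r - Φ n s r| ≤ ε) :
    ∃ φ : ℝ → ℝ → ℝ, Continuous ↿φ ∧ ∀ T, ∀ ε > 0, ∃ N, ∀ n ≥ N, ∀ s ∈ Icc 0 T, ∀ r ∈ Icc 0 R,
      |Φ n s r - φ s r| ≤ ε := by
  set Ψ : ℕ → ℝ × ℝ → ℝ := fun n p => Φ n (max p.1 0) (clampIcc R p.2) with hΨ
  have hΨc : ∀ n, Continuous (Ψ n) := fun n => by have := hΦ n; rw [hΨ]; fun_prop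
  have hcau : ∀ T, ∀ ε > 0, ∃ N, ∀ m ≥ N, ∀ n ≥ N, ∀ p : ℝ × ℝ, p.1 ≤ T →
      |Ψ m p - Ψ n p| ≤ ε := by
    intro T ε hε
    obtain ⟨N, hN⟩ := h (max T 0) ε hε
    exact ⟨N, fun m hm n hn p hp => hN m hm n hn _
      ⟨le_max_right _ _, max_le_max_right _ hp⟩ _ (clampIcc_mem hR _)⟩
  have hlim : ∀ p, ∃ l, Filter.Tendsto (fun n => Ψ n p) Filter.atTop (nhds l) := by
    intro p
    apply cauchySeq_tendsto_of_complete
    rw [Metric.cauchySeq_iff]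
    intro ε hε
    obtain ⟨N, hN⟩ := hcau p.1 (ε / 2) (by positivity)
    exact ⟨N, fun m hm n hn => (hN m hm n hn p le_rfl).trans_lt (by linarith)⟩
  choose ψ hψ using hlim
  have hunif : ∀ T, ∀ ε > 0, ∃ N, ∀ n ≥ N, ∀ p : ℝ × ℝ, p.1 ≤ T → |Ψ n p - ψ p| ≤ ε := by
    intro T ε hε
    obtain ⟨N, hN⟩ := hcau T ε hε
    refine ⟨N, fun n hn p hp => ?_⟩
    exact le_of_tendsto (((hψ p).const_sub (Ψ n p)).abs)
      (Filter.eventually_atTop.2 ⟨N, fun m hm => hN n hn m hm p hp⟩)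
  have hψc : Continuous ψ := by
    have : TendstoLocallyUniformly Ψ ψ Filter.atTop := by
      rw [Metric.tendstoLocallyUniformly_iff]
      intro ε hε p
      obtain ⟨N, hN⟩ := hunif (p.1 + 1) (ε / 2) (by positivity)
      refine ⟨{q | q.1 < p.1 + 1}, (isOpen_lt continuous_fst continuous_const).mem_nhds
        (by simp), ?_⟩
      filter_upwards [Filter.eventually_ge_atTop N] with n hn q hq
      rw [dist_comm]
      exact (hN n hn q (le_of_lt hq)).trans_lt (by linarith)
    exact this.continuous (Filter.Frequently.of_forall hΨc)
  refine ⟨fun u r => ψ (u, r), hψc, fun T ε hε => ?_⟩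
  obtain ⟨N, hN⟩ := hunif T ε hε
  refine ⟨N, fun n hn s hs r hr => ?_⟩
  have := hN n hn (s, r) hs.2
  simpa only [hΨ, max_eq_left hs.1, clampIcc_of_mem hr] using this

theorem hasDerivWithinAt_of_uniform_limit {R : ℝ} {φ ψ : ℕ → ℝ → ℝ} {φ' ψ' : ℝ → ℝ}
    (hφ : ∀ n, ∀ r ∈ Icc 0 R, HasDerivWithinAt (φ n) (ψ n r) (Icc 0 R) r)
    (hψ : ∀ n, Continuous (ψ n)) (hψ' : Continuous ψ')
    (h : ∀ ε > 0, ∃ N, ∀ n ≥ N, ∀ r ∈ Icc 0 R, |φ n r - φ' r| ≤ ε)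
    (h' : ∀ ε > 0, ∃ N, ∀ n ≥ N, ∀ r ∈ Icc 0 R, |ψ n r - ψ' r| ≤ ε) :
    ∀ r ∈ Icc 0 R, HasDerivWithinAt φ' (ψ' r) (Icc 0 R) r := by
  have lim : ∀ {x : ℕ → ℝ} {l : ℝ}, (∀ ε > 0, ∃ N, ∀ n ≥ N, |x n - l| ≤ ε) →
      Filter.Tendsto x Filter.atTop (nhds l) := by
    intro x l hx
    rw [Metric.tendsto_atTop]
    intro ε hε
    obtain ⟨N, hN⟩ := hx (ε / 2) (by positivity)
    exact ⟨N, fun n hn => (hN n hn).trans_lt (by linarith)⟩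
  intro r hr
  have := hasDerivWithinAt_of_sub_eq_mul (s := Icc 0 R) (r := r) (φ := φ')
    (K := fun r' => segMean ψ' r r') (fun r' hr' => ?_) ?_
  · rwa [segMean_self] at this
  · have l1 : ∀ x ∈ Icc 0 R, Filter.Tendsto (fun n => φ n x) Filter.atTop (nhds (φ' x)) :=
      fun x hx => lim fun ε hε => (h ε hε).imp fun N hN n hn => hN n hn x hx
    have l2 : Filter.Tendsto (fun n => segMean (ψ n) r r') Filter.atTop
        (nhds (segMean ψ' r r')) := by
      refine lim fun ε hε => (h' ε hε).imp fun N hN n hn => ?_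
      have hn' := hψ n
      have := segMean_sub_le (ψ := fun x => ψ n x - ψ' x) (by fun_prop) (c := 0) (m := ε) hr hr'
        (fun x hx _ => by simpa [abs_sub_comm] using hN n hn x hx)
      have e : segMean (fun x => ψ n x - ψ' x) r r' = segMean (ψ n) r r' - segMean ψ' r r' := by
        unfold segMean
        exact intervalIntegral.integral_sub (by apply Continuous.intervalIntegrable; fun_prop)
          (by apply Continuous.intervalIntegrable; fun_prop)
      rwa [e, zero_sub, abs_neg] at this
    refine tendsto_nhds_unique ((l1 r' hr').sub (l1 r hr)) ?_
    refine (l2.const_mul (r' - r)).congr fun n => ?_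
    rw [sub_eq_mul_segMean (hφ n) (hψ n) hr hr']
  · apply Continuous.continuousWithinAt
    unfold segMean
    fun_prop

/-- Interpolation: the derivative is controlled by the function and the modulus of continuity of
the derivative. -/
theorem abs_deriv_le_of_modulus {R : ℝ} {φ ψ : ℝ → ℝ}
    (hφ : ∀ r ∈ Icc 0 R, HasDerivWithinAt φ (ψ r) (Icc 0 R) r) (hψ : Continuous ψ)
    {d δ η : ℝ} (hδ : 0 < δ) (hδR : δ ≤ R) (hd : ∀ r ∈ Icc 0 R, |φ r| ≤ d)
    (hη : ∀ a ∈ Icc 0 R, ∀ b ∈ Icc 0 R, |a - b| ≤ δ → |ψ a - ψ b| ≤ η) {r : ℝ}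
    (hr : r ∈ Icc 0 R) : |ψ r| ≤ η + 4 * d / δ := by
  obtain ⟨r', hr', hrr⟩ : ∃ r' ∈ Icc 0 R, |r' - r| = δ / 2 := by
    rcases le_total (r + δ / 2) R with h | h
    · exact ⟨r + δ / 2, ⟨by linarith [hr.1], h⟩, by
        rw [add_sub_cancel_left, abs_of_pos (by positivity)]⟩
    · refine ⟨r - δ / 2, ⟨by linarith, by linarith [hr.2]⟩, ?_⟩
      rw [sub_sub_cancel_left, abs_neg, abs_of_pos (by positivity)]
  have h1 := segMean_sub_le hψ (c := ψ r) (m := η) hr hr' (fun x hx hxr => by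
    refine hη r hr x hx ?_
    rw [abs_sub_comm]
    linarith)
  have h2 := sub_eq_mul_segMean hφ hψ hr hr'
  have h3 : |r' - r| * |segMean ψ r r'| ≤ 2 * d := by
    rw [← abs_mul, ← h2]
    exact (abs_sub _ _).trans (by linarith [hd r hr, hd r' hr'])
  rw [hrr] at h3
  have h4 : |segMean ψ r r'| ≤ 4 * d / δ := by
    rw [le_div_iff₀ hδ]
    linarith
  have h5 : |ψ r| ≤ |ψ r - segMean ψ r r'| + |segMean ψ r r'| := by
    simpa using abs_add_le (ψ r - segMean ψ r r') (segMean ψ r r')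
  linarith

/-- Coefficients of a quasilinear transport equation `∂ᵤ h = 𝓕[∂ᵣ h] / 2 * ∂ᵣ h + 𝓢[∂ᵣ h]`, with
`2 * 𝓖` and `𝓨` the radial derivatives of `𝓕` and `𝓢`. -/
structure IsCoefficients (R : ℝ) (𝓕 𝓖 𝓢 𝓨 : (ℝ → ℝ) → ℝ → ℝ) : Prop where
  isVelocity : ∀ {v : ℝ → ℝ → ℝ}, Continuous ↿v →
    IsVelocity R (fun u => 𝓕 (v u)) (fun u => 𝓖 (v u))
  continuous_source : ∀ {v : ℝ → ℝ → ℝ}, Continuous ↿v → Continuous ↿(fun u => 𝓢 (v u))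
  continuous_source_deriv : ∀ {v : ℝ → ℝ → ℝ}, Continuous ↿v → Continuous ↿(fun u => 𝓨 (v u))
  source_deriv : ∀ {φ : ℝ → ℝ}, Continuous φ → ∀ r ∈ Icc 0 R,
    HasDerivWithinAt (𝓢 φ) (𝓨 φ r) (Icc 0 R) r
  source_deriv_le : ∃ C, 0 ≤ C ∧ ∀ {φ : ℝ → ℝ} {N : ℝ}, Continuous φ →
    (∀ r ∈ Icc 0 R, |φ r| ≤ N) → ∀ r ∈ Icc 0 R, |𝓨 φ r| ≤ C * N
  modulus : ∀ V, ∃ C, 0 ≤ C ∧ ∀ {φ : ℝ → ℝ}, Continuous φ → (∀ r ∈ Icc 0 R, |φ r| ≤ V) →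
    ∀ {δ η : ℝ}, 0 < δ → δ ≤ η →
    (∀ a ∈ Icc 0 R, ∀ b ∈ Icc 0 R, |a - b| ≤ δ → |φ a - φ b| ≤ η) →
    ∀ a ∈ Icc 0 R, ∀ b ∈ Icc 0 R, |a - b| ≤ δ →
      |𝓖 φ a - 𝓖 φ b| ≤ C * η ∧ |𝓨 φ a - 𝓨 φ b| ≤ C * η
  lipschitz : ∀ V, ∃ C, 0 ≤ C ∧ ∀ {h₁ h₂ φ₁ φ₂ : ℝ → ℝ} {d : ℝ}, Continuous φ₁ → Continuous φ₂ →
    (∀ r ∈ Icc 0 R, HasDerivWithinAt h₁ (φ₁ r) (Icc 0 R) r) →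
    (∀ r ∈ Icc 0 R, HasDerivWithinAt h₂ (φ₂ r) (Icc 0 R) r) →
    (∀ r ∈ Icc 0 R, |φ₁ r| ≤ V) → (∀ r ∈ Icc 0 R, |φ₂ r| ≤ V) →
    (∀ r ∈ Icc 0 R, |h₁ r - h₂ r| ≤ d) → ∀ r ∈ Icc 0 R,
      |𝓕 φ₁ r - 𝓕 φ₂ r| ≤ C * d ∧ |𝓢 φ₁ r - 𝓢 φ₂ r| ≤ C * d

/-- One step of the iteration scheme: `(h', v')` solves the linear equation with coefficients
frozen at `v`. -/
structure IsStep (R : ℝ) (𝓕 𝓖 𝓢 𝓨 : (ℝ → ℝ) → ℝ → ℝ) (h₀ v₀ : ℝ → ℝ) (v h' v' : ℝ → ℝ → ℝ) :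
    Prop where
  isTransport : IsTransport R (fun u => 𝓕 (v u)) (fun u => 𝓢 (v u)) h' v'
  init : ∀ r ∈ Icc 0 R, h' 0 r = h₀ r
  init_deriv : ∀ r ∈ Icc 0 R, v' 0 r = v₀ r
  exists_flow : ∃ X, IsFlow R (fun u => 𝓕 (v u)) X ∧
    IsDerivTransport R (fun u => 𝓖 (v u)) (fun u => 𝓨 (v u)) X v'

section Quasilinear

variable {R : ℝ} {𝓕 𝓖 𝓢 𝓨 : (ℝ → ℝ) → ℝ → ℝ} {h₀ v₀ : ℝ → ℝ}

theorem exists_isStep (hR : 0 ≤ R) (hC : IsCoefficients R 𝓕 𝓖 𝓢 𝓨) (hh₀ : Continuous h₀)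
    (hv₀ : Continuous v₀) (hhv : ∀ r ∈ Icc 0 R, HasDerivWithinAt h₀ (v₀ r) (Icc 0 R) r)
    {v : ℝ → ℝ → ℝ} (hv : Continuous ↿v) : ∃ h' v', IsStep R 𝓕 𝓖 𝓢 𝓨 h₀ v₀ v h' v' := by
  obtain ⟨X, hX⟩ := exists_isFlow hR (hC.isVelocity hv)
  obtain ⟨h', v', h1, h2, h3, h4⟩ := exists_isTransport (hC.isVelocity hv) hX
    (hC.continuous_source hv) (hC.continuous_source_deriv hv)
    (fun u r hr => hC.source_deriv (by fun_prop) r hr) hh₀ hv₀ hhv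
  exact ⟨h', v', h1, h2, h3, X, hX, h4⟩

theorem IsStep.abs_le {v h' v' : ℝ → ℝ → ℝ} (h : IsStep R 𝓕 𝓖 𝓢 𝓨 h₀ v₀ v h' v')
    (hC : IsCoefficients R 𝓕 𝓖 𝓢 𝓨) (hv : Continuous ↿v) {x C : ℝ}
    (hY : ∀ {φ : ℝ → ℝ} {N : ℝ}, Continuous φ →
      (∀ r ∈ Icc 0 R, |φ r| ≤ N) → ∀ r ∈ Icc 0 R, |𝓨 φ r| ≤ C * N)
    (hx : ∀ r ∈ Icc 0 R, |v₀ r| ≤ x)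
    (hvx : ∀ u, 0 ≤ u → ∀ r ∈ Icc 0 R, |v u r| ≤ x * Real.exp (C * u)) {u : ℝ} (hu : 0 ≤ u)
    {r : ℝ} (hr : r ∈ Icc 0 R) : |v' u r| ≤ x * Real.exp (C * u) := by
  obtain ⟨X, hX, hD⟩ := h.exists_flow
  have hχ := hX.isChar u hu r
  have hx0 : 0 ≤ x := (abs_nonneg _).trans (hx r hr)
  have := abs_le_of_damped (B := fun s => x * Real.exp (C * s))
    (B' := fun s => C * (x * Real.exp (C * s))) hu (hD u hu r hr)
    (fun s _ => (hC.isVelocity hv).nonpos s _ (hχ.mem s)) (fun s _ => ?_) (fun s hs => ?_) ?_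
  · simpa only [hX.self u hu r hr] using this
  · have h1 : HasDerivAt (fun s : ℝ => C * s) C s := by
      simpa using (hasDerivAt_id s).const_mul C
    exact ((h1.exp.const_mul x).congr_deriv (by ring)).hasDerivWithinAt
  · have h1 := hY (φ := v s) (by fun_prop) (hvx s hs.1) _ (hχ.mem s)
    have h2 := mul_nonpos_of_nonpos_of_nonneg ((hC.isVelocity hv).nonpos s _ (hχ.mem s))
      (by positivity : 0 ≤ x * Real.exp (C * s))
    linarith
  · simpa [h.init_deriv _ (hχ.mem 0)] using hx _ (hχ.mem 0)

theorem IsStep.modulus {v h' v' : ℝ → ℝ → ℝ} (h : IsStep R 𝓕 𝓖 𝓢 𝓨 h₀ v₀ v h' v')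
    (hC : IsCoefficients R 𝓕 𝓖 𝓢 𝓨) (hv : Continuous ↿v) {V C T δ ε : ℝ} (hC0 : 0 ≤ C)
    (hmod : ∀ {φ : ℝ → ℝ}, Continuous φ → (∀ r ∈ Icc 0 R, |φ r| ≤ V) →
      ∀ {δ η : ℝ}, 0 < δ → δ ≤ η →
      (∀ a ∈ Icc 0 R, ∀ b ∈ Icc 0 R, |a - b| ≤ δ → |φ a - φ b| ≤ η) →
      ∀ a ∈ Icc 0 R, ∀ b ∈ Icc 0 R, |a - b| ≤ δ →
        |𝓖 φ a - 𝓖 φ b| ≤ C * η ∧ |𝓨 φ a - 𝓨 φ b| ≤ C * η)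
    (hδ : 0 < δ) (hδε : δ ≤ ε)
    (hv0 : ∀ a ∈ Icc 0 R, ∀ b ∈ Icc 0 R, |a - b| ≤ δ → |v₀ a - v₀ b| ≤ ε)
    (hvV : ∀ u ∈ Icc 0 T, ∀ r ∈ Icc 0 R, |v u r| ≤ V)
    (hvV' : ∀ u ∈ Icc 0 T, ∀ r ∈ Icc 0 R, |v' u r| ≤ V)
    (hvm : ∀ u ∈ Icc 0 T, ∀ a ∈ Icc 0 R, ∀ b ∈ Icc 0 R, |a - b| ≤ δ →
      |v u a - v u b| ≤ ε * Real.exp (C * (V + 1) * u)) :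
    ∀ u ∈ Icc 0 T, ∀ a ∈ Icc 0 R, ∀ b ∈ Icc 0 R, |a - b| ≤ δ →
      |v' u a - v' u b| ≤ ε * Real.exp (C * (V + 1) * u) := by
  obtain ⟨X, hX, hD⟩ := h.exists_flow
  intro u hu a ha b hb hab
  have hF := hC.isVelocity hv
  have hV0 : 0 ≤ V := (abs_nonneg _).trans (hvV u hu a ha)
  have hχa := hX.isChar u hu.1 a
  have hχb := hX.isChar u hu.1 b
  have hχ : ∀ s, |X u a s - X u b s| ≤ δ := fun s => by
    refine (hχa.abs_sub_le hF hu.1 hχb s).trans ?_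
    rwa [hX.self u hu.1 a ha, hX.self u hu.1 b hb]
  have := abs_le_of_damped (y := fun s => v' s (X u a s) - v' s (X u b s))
    (a := fun s => 𝓖 (v s) (X u a s))
    (b := fun s => (𝓖 (v s) (X u a s) - 𝓖 (v s) (X u b s)) * v' s (X u b s) +
      (𝓨 (v s) (X u a s) - 𝓨 (v s) (X u b s)))
    (B := fun s => ε * Real.exp (C * (V + 1) * s))
    (B' := fun s => C * (V + 1) * (ε * Real.exp (C * (V + 1) * s))) hu.1
    (fun s hs => ((hD u hu.1 a ha s hs).sub (hD u hu.1 b hb s hs)).congr_deriv (by ring))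
    (fun s _ => hF.nonpos s _ (hχa.mem s)) (fun s _ => ?_) (fun s hs => ?_) ?_
  · simpa only [hX.self u hu.1 a ha, hX.self u hu.1 b hb] using this
  · have h1 : HasDerivAt (fun s : ℝ => C * (V + 1) * s) (C * (V + 1)) s := by
      simpa using (hasDerivAt_id s).const_mul (C * (V + 1))
    exact ((h1.exp.const_mul ε).congr_deriv (by ring)).hasDerivWithinAt
  · have hsT : s ∈ Icc 0 T := ⟨hs.1, hs.2.trans hu.2⟩
    have hexp : 1 ≤ Real.exp (C * (V + 1) * s) :=
      Real.one_le_exp (mul_nonneg (by positivity) hs.1)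
    have hε0 : 0 < ε := hδ.trans_le hδε
    set η := ε * Real.exp (C * (V + 1) * s) with hη
    have hδη : δ ≤ η := hδε.trans (le_mul_of_one_le_right hε0.le hexp)
    obtain ⟨h1, h2⟩ := hmod (φ := v s) (by fun_prop) (hvV s hsT) hδ hδη (hvm s hsT) _ (hχa.mem s) _
      (hχb.mem s) (hχ s)
    have h3 := hvV' s hsT _ (hχb.mem s)
    have h4 := mul_nonpos_of_nonpos_of_nonneg (hF.nonpos s _ (hχa.mem s)) (hδ.le.trans hδη)
    have h5 := abs_add_le ((𝓖 (v s) (X u a s) - 𝓖 (v s) (X u b s)) * v' s (X u b s))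
      (𝓨 (v s) (X u a s) - 𝓨 (v s) (X u b s))
    rw [abs_mul] at h5
    have h6 : |𝓖 (v s) (X u a s) - 𝓖 (v s) (X u b s)| * |v' s (X u b s)| ≤ C * η * V := by
      gcongr
    linarith
  · simp only [h.init_deriv _ (hχa.mem 0), h.init_deriv _ (hχb.mem 0), mul_zero, Real.exp_zero,
      mul_one]
    exact hv0 _ (hχa.mem 0) _ (hχb.mem 0) (hχ 0)

end Quasilinear

/-- A sequence of iterates of the scheme `IsStep`, starting from the stationary extension of the
data. -/
structure IsIteration (R : ℝ) (𝓕 𝓖 𝓢 𝓨 : (ℝ → ℝ) → ℝ → ℝ) (h₀ v₀ : ℝ → ℝ)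
    (H V : ℕ → ℝ → ℝ → ℝ) : Prop where
  zero_left : H 0 = fun _ => h₀
  zero_right : V 0 = fun _ => v₀
  step : ∀ n, IsStep R 𝓕 𝓖 𝓢 𝓨 h₀ v₀ (V n) (H (n + 1)) (V (n + 1))

section Iteration

variable {R : ℝ} {𝓕 𝓖 𝓢 𝓨 : (ℝ → ℝ) → ℝ → ℝ} {h₀ v₀ : ℝ → ℝ} {H V : ℕ → ℝ → ℝ → ℝ}

theorem exists_isIteration (hR : 0 ≤ R) (hC : IsCoefficients R 𝓕 𝓖 𝓢 𝓨) (hh₀ : Continuous h₀)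
    (hv₀ : Continuous v₀) (hhv : ∀ r ∈ Icc 0 R, HasDerivWithinAt h₀ (v₀ r) (Icc 0 R) r) :
    ∃ H V, IsIteration R 𝓕 𝓖 𝓢 𝓨 h₀ v₀ H V := by
  have key : ∀ q : {p : (ℝ → ℝ → ℝ) × (ℝ → ℝ → ℝ) // Continuous ↿p.2},
      ∃ q' : {p : (ℝ → ℝ → ℝ) × (ℝ → ℝ → ℝ) // Continuous ↿p.2},
        IsStep R 𝓕 𝓖 𝓢 𝓨 h₀ v₀ q.1.2 q'.1.1 q'.1.2 := by
    intro q
    obtain ⟨h', v', h⟩ := exists_isStep hR hC hh₀ hv₀ hhv q.2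
    exact ⟨⟨(h', v'), h.isTransport.continuous_deriv⟩, h⟩
  choose f hf using key
  set q₀ : {p : (ℝ → ℝ → ℝ) × (ℝ → ℝ → ℝ) // Continuous ↿p.2} :=
    ⟨(fun _ => h₀, fun _ => v₀), by fun_prop⟩ with hq₀
  refine ⟨fun n => (f^[n] q₀).1.1, fun n => (f^[n] q₀).1.2, rfl, rfl, fun n => ?_⟩
  simp only [Function.iterate_succ_apply']
  exact hf _

variable (hI : IsIteration R 𝓕 𝓖 𝓢 𝓨 h₀ v₀ H V) (hC : IsCoefficients R 𝓕 𝓖 𝓢 𝓨)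

include hI in
theorem IsIteration.continuous (hh₀ : Continuous h₀) (n : ℕ) : Continuous ↿(H n) := by
  cases n with
  | zero => rw [hI.zero_left]; fun_prop
  | succ n => exact (hI.step n).isTransport.continuous

include hI in
theorem IsIteration.continuous_deriv (hv₀ : Continuous v₀) (n : ℕ) : Continuous ↿(V n) := by
  cases n with
  | zero => rw [hI.zero_right]; fun_prop
  | succ n => exact (hI.step n).isTransport.continuous_deriv

include hI in
theorem IsIteration.deriv_right (hhv : ∀ r ∈ Icc 0 R, HasDerivWithinAt h₀ (v₀ r) (Icc 0 R) r)
    (n : ℕ) : ∀ u, 0 ≤ u → ∀ r ∈ Icc 0 R, HasDerivWithinAt (H n u) (V n u r) (Icc 0 R) r := by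
  cases n with
  | zero => rw [hI.zero_left, hI.zero_right]; exact fun u _ => hhv
  | succ n => exact (hI.step n).isTransport.deriv_right

include hI in
theorem IsIteration.init (n : ℕ) : ∀ r ∈ Icc 0 R, H n 0 r = h₀ r := by
  cases n with
  | zero => simp [hI.zero_left]
  | succ n => exact (hI.step n).init

include hI hC in
theorem IsIteration.exists_abs_le (hv₀ : Continuous v₀) (T : ℝ) :
    ∃ W, 0 ≤ W ∧ ∀ n, ∀ u ∈ Icc 0 T, ∀ r ∈ Icc 0 R, |V n u r| ≤ W := by
  obtain ⟨C, hC0, hY⟩ := hC.source_deriv_le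
  obtain ⟨x, hx0, hx⟩ := exists_abs_le_of_continuous (Φ := fun _ => v₀) (by fun_prop) R 0
  replace hx := hx 0 ⟨le_rfl, le_rfl⟩
  have key : ∀ n, ∀ u, 0 ≤ u → ∀ r ∈ Icc 0 R, |V n u r| ≤ x * Real.exp (C * u) := by
    intro n
    induction n with
    | zero =>
      intro u hu r hr
      rw [hI.zero_right]
      exact (hx r hr).trans (le_mul_of_one_le_right hx0 (Real.one_le_exp (by positivity)))
    | succ n ih =>
      exact fun u hu r hr => (hI.step n).abs_le hC (hI.continuous_deriv hv₀ n) hY hx ih hu hr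
  refine ⟨x * Real.exp (C * T), by positivity, fun n u hu r hr => (key n u hu.1 r hr).trans ?_⟩
  have := hu.2
  gcongr

include hI hC in
theorem IsIteration.equicontinuous (hv₀ : Continuous v₀) (T : ℝ) {ε : ℝ} (hε : 0 < ε) :
    ∃ δ > 0, ∀ n, ∀ u ∈ Icc 0 T, ∀ a ∈ Icc 0 R, ∀ b ∈ Icc 0 R, |a - b| ≤ δ →
      |V n u a - V n u b| ≤ ε := by
  obtain ⟨W, hW0, hW⟩ := hI.exists_abs_le hC hv₀ T
  obtain ⟨C, hC0, hmod⟩ := hC.modulus W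
  set ε' := ε * Real.exp (-(C * (W + 1) * T)) with hε'
  have hε'0 : 0 < ε' := by positivity
  obtain ⟨δ, hδ, hδv⟩ := Metric.uniformContinuousOn_iff.1
    (isCompact_Icc.uniformContinuousOn_of_continuous (hv₀.continuousOn (s := Icc 0 R))) ε' hε'0
  have hinit : ∀ a ∈ Icc 0 R, ∀ b ∈ Icc 0 R, |a - b| ≤ min (δ / 2) ε' → |v₀ a - v₀ b| ≤ ε' := by
    intro a ha b hb hab
    refine (hδv a ha b hb (lt_of_le_of_lt hab ?_)).le
    exact (min_le_left _ _).trans_lt (by linarith)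
  have hm0 : 0 < min (δ / 2) ε' := lt_min (by positivity) hε'0
  have key : ∀ n, ∀ u ∈ Icc 0 T, ∀ a ∈ Icc 0 R, ∀ b ∈ Icc 0 R, |a - b| ≤ min (δ / 2) ε' →
      |V n u a - V n u b| ≤ ε' * Real.exp (C * (W + 1) * u) := by
    intro n
    induction n with
    | zero =>
      intro u hu a ha b hb hab
      rw [hI.zero_right]
      exact (hinit a ha b hb hab).trans (le_mul_of_one_le_right hε'0.le
        (Real.one_le_exp (mul_nonneg (by positivity) hu.1)))
    | succ n ih =>
      exact (hI.step n).modulus hC (hI.continuous_deriv hv₀ n) hC0 hmod hm0 (min_le_right _ _)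
        hinit (hW n) (hW (n + 1)) ih
  refine ⟨min (δ / 2) ε', hm0, fun n u hu a ha b hb hab => (key n u hu a ha b hb hab).trans ?_⟩
  have hu2 := hu.2
  calc ε' * Real.exp (C * (W + 1) * u) ≤ ε' * Real.exp (C * (W + 1) * T) := by gcongr
    _ = ε := by rw [hε', mul_assoc, ← Real.exp_add]; simp

include hI hC in
theorem IsIteration.contraction (hh₀ : Continuous h₀) (hv₀ : Continuous v₀)
    (hhv : ∀ r ∈ Icc 0 R, HasDerivWithinAt h₀ (v₀ r) (Icc 0 R) r) (T : ℝ) :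
    ∃ K, 0 ≤ K ∧ ∀ n, ∀ u ∈ Icc 0 T, ∀ r ∈ Icc 0 R,
      |H (n + 1) u r - H n u r| ≤ K * (1 / 2) ^ n := by
  obtain ⟨W, hW0, hW⟩ := hI.exists_abs_le hC hv₀ T
  obtain ⟨C, hC0, hlip⟩ := hC.lipschitz W
  have hc0 := hI.continuous hh₀ 0
  have hc1 := hI.continuous hh₀ 1
  obtain ⟨M, hM0, hM⟩ := exists_abs_le_of_continuous (Φ := fun u r => H 1 u r - H 0 u r)
    (by fun_prop) R T
  set ω := C * (W / 2 + 1) with hω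
  have key : ∀ n, ∀ u ∈ Icc 0 T, ∀ r ∈ Icc 0 R,
      |H (n + 1) u r - H n u r| ≤ M * (1 / 2) ^ n * Real.exp (2 * ω * u) := by
    intro n
    induction n with
    | zero =>
      intro u hu r hr
      rw [pow_zero, mul_one]
      exact (hM u hu r hr).trans (le_mul_of_one_le_right hM0
        (Real.one_le_exp (mul_nonneg (by positivity) hu.1)))
    | succ n ih =>
      intro u hu r hr
      obtain ⟨X, hX, -⟩ := (hI.step (n + 1)).exists_flow
      have := (hI.step (n + 1)).isTransport.abs_sub_le (hI.step n).isTransport hX (C := ω)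
        (M := M * (1 / 2) ^ n) (u := u) (fun r hr => by rw [hI.init _ r hr, hI.init _ r hr])
        (by positivity) hu.1 (fun s hs ρ hρ => ?_) hr
      · refine this.trans (le_of_eq ?_)
        ring
      · have hsT : s ∈ Icc 0 T := ⟨hs.1, hs.2.trans hu.2⟩
        have hcV := hI.continuous_deriv hv₀ n
        have hcV' := hI.continuous_deriv hv₀ (n + 1)
        obtain ⟨h1, h2⟩ := hlip (φ₁ := V (n + 1) s) (φ₂ := V n s) (by fun_prop) (by fun_prop)
          (hI.deriv_right hhv _ s hs.1) (hI.deriv_right hhv _ s hs.1) (hW _ s hsT) (hW _ s hsT)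
          (ih s hsT) ρ hρ
        have h3 := hW (n + 1) s hsT ρ hρ
        set D := M * (1 / 2) ^ n * Real.exp (2 * ω * s) with hD
        have hD0 : 0 ≤ D := by positivity
        have h4 := abs_add_le ((𝓕 (V (n + 1) s) ρ - 𝓕 (V n s) ρ) / 2 * V (n + 1) s ρ)
          (𝓢 (V (n + 1) s) ρ - 𝓢 (V n s) ρ)
        rw [abs_mul, abs_div, abs_two] at h4
        have h5 : |𝓕 (V (n + 1) s) ρ - 𝓕 (V n s) ρ| / 2 * |V (n + 1) s ρ| ≤ C * D / 2 * W := by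
          gcongr
        rw [mul_assoc, ← hD, hω]
        linarith
  refine ⟨M * Real.exp (2 * ω * T), by positivity, fun n u hu r hr =>
    (key n u hu r hr).trans ?_⟩
  have h1 : Real.exp (2 * ω * u) ≤ Real.exp (2 * ω * T) := by
    have := hu.2
    gcongr
  calc M * (1 / 2) ^ n * Real.exp (2 * ω * u) ≤ M * (1 / 2) ^ n * Real.exp (2 * ω * T) := by
        gcongr
    _ = _ := by ring

include hI hC in
theorem IsIteration.uniformCauchy (hh₀ : Continuous h₀) (hv₀ : Continuous v₀)
    (hhv : ∀ r ∈ Icc 0 R, HasDerivWithinAt h₀ (v₀ r) (Icc 0 R) r) (T : ℝ) {ε : ℝ} (hε : 0 < ε) :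
    ∃ N, ∀ m ≥ N, ∀ n ≥ N, ∀ s ∈ Icc 0 T, ∀ r ∈ Icc 0 R, |H m s r - H n s r| ≤ ε := by
  obtain ⟨K, hK0, hK⟩ := hI.contraction hC hh₀ hv₀ hhv T
  have key : ∀ N k, ∀ s ∈ Icc 0 T, ∀ r ∈ Icc 0 R,
      |H (N + k) s r - H N s r| ≤ 2 * K * (1 / 2) ^ N * (1 - (1 / 2) ^ k) := by
    intro N k s hs r hr
    induction k with
    | zero => simp
    | succ k ih =>
      have h1 := hK (N + k) s hs r hr
      have h2 := abs_sub_le (H (N + k + 1) s r) (H (N + k) s r) (H N s r)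
      rw [← add_assoc]
      rw [pow_add] at h1
      rw [pow_succ (1 / 2 : ℝ) k]
      linarith
  have hlim : Filter.Tendsto (fun N : ℕ => 4 * K * (1 / 2 : ℝ) ^ N) Filter.atTop (nhds 0) := by
    simpa using (tendsto_pow_atTop_nhds_zero_of_lt_one (by norm_num : (0:ℝ) ≤ 1 / 2)
      (by norm_num)).const_mul (4 * K)
  obtain ⟨N, hN⟩ := (hlim.eventually_le_const hε).exists
  have key' : ∀ n ≥ N, ∀ s ∈ Icc 0 T, ∀ r ∈ Icc 0 R, |H n s r - H N s r| ≤ ε / 2 := by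
    intro n hn s hs r hr
    obtain ⟨k, rfl⟩ := Nat.exists_eq_add_of_le hn
    refine (key N k s hs r hr).trans ?_
    have h1 : (0:ℝ) ≤ (1 / 2) ^ k := by positivity
    have h2 : 2 * K * (1 / 2) ^ N * (1 - (1 / 2) ^ k) ≤ 2 * K * (1 / 2) ^ N * 1 := by
      gcongr
      linarith
    linarith
  refine ⟨N, fun m hm n hn s hs r hr => ?_⟩
  have h1 := key' m hm s hs r hr
  have h2 := key' n hn s hs r hr
  have h3 := abs_sub_le (H m s r) (H N s r) (H n s r)
  rw [abs_sub_comm (H N s r)] at h3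
  linarith

include hI hC in
theorem IsIteration.uniformCauchy_deriv (hR : 0 < R) (hh₀ : Continuous h₀) (hv₀ : Continuous v₀)
    (hhv : ∀ r ∈ Icc 0 R, HasDerivWithinAt h₀ (v₀ r) (Icc 0 R) r) (T : ℝ) {ε : ℝ} (hε : 0 < ε) :
    ∃ N, ∀ m ≥ N, ∀ n ≥ N, ∀ s ∈ Icc 0 T, ∀ r ∈ Icc 0 R, |V m s r - V n s r| ≤ ε := by
  obtain ⟨δ, hδ, hequi⟩ := hI.equicontinuous hC hv₀ T (by positivity : 0 < ε / 4)
  have hm : 0 < min δ R := lt_min hδ hR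
  obtain ⟨N, hN⟩ := hI.uniformCauchy hC hh₀ hv₀ hhv T (by positivity : 0 < ε * min δ R / 8)
  refine ⟨N, fun m hm' n hn s hs r hr => ?_⟩
  have hcm := hI.continuous_deriv hv₀ m
  have hcn := hI.continuous_deriv hv₀ n
  refine (abs_deriv_le_of_modulus (φ := fun r => H m s r - H n s r)
    (ψ := fun r => V m s r - V n s r)
    (fun r hr => (hI.deriv_right hhv m s hs.1 r hr).sub (hI.deriv_right hhv n s hs.1 r hr))
    (by fun_prop) hm (min_le_right _ _) (hN m hm' n hn s hs) (η := ε / 2) ?_ hr).trans ?_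
  · intro a ha b hb hab
    have h1 := hequi m s hs a ha b hb (hab.trans (min_le_left _ _))
    have h2 := hequi n s hs a ha b hb (hab.trans (min_le_left _ _))
    have h3 := abs_sub (V m s a - V m s b) (V n s a - V n s b)
    rw [show V m s a - V n s a - (V m s b - V n s b)
      = (V m s a - V m s b) - (V n s a - V n s b) by ring]
    linarith
  · apply le_of_eq
    field_simp
    ring

include hC in
/-- Global existence for quasilinear transport equations. -/
theorem exists_quasilinear_transport (hR : 0 < R) (hh₀ : Continuous h₀) (hv₀ : Continuous v₀)
    (hhv : ∀ r ∈ Icc 0 R, HasDerivWithinAt h₀ (v₀ r) (Icc 0 R) r) :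
    ∃ h v X, IsTransport R (fun u => 𝓕 (v u)) (fun u => 𝓢 (v u)) h v ∧
      (∀ r ∈ Icc 0 R, h 0 r = h₀ r) ∧ IsFlow R (fun u => 𝓕 (v u)) X ∧
      IsDerivTransport R (fun u => 𝓖 (v u)) (fun u => 𝓨 (v u)) X v := by
  obtain ⟨H, V, hI⟩ := exists_isIteration hR.le hC hh₀ hv₀ hhv
  obtain ⟨h, hhc, hh⟩ := exists_limit_of_uniformCauchy hR.le (hI.continuous hh₀)
    (fun T ε hε => hI.uniformCauchy hC hh₀ hv₀ hhv T hε)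
  obtain ⟨v, hvc, hv⟩ := exists_limit_of_uniformCauchy hR.le (hI.continuous_deriv hv₀)
    (fun T ε hε => hI.uniformCauchy_deriv hC hR hh₀ hv₀ hhv T hε)
  have hd : ∀ u, 0 ≤ u → ∀ r ∈ Icc 0 R, HasDerivWithinAt (h u) (v u r) (Icc 0 R) r := by
    intro u hu
    refine hasDerivWithinAt_of_uniform_limit (φ := fun n => H n u) (ψ := fun n => V n u)
      (fun n => hI.deriv_right hhv n u hu) (fun n => ?_) (by fun_prop) ?_ ?_
    · have := hI.continuous_deriv hv₀ n
      fun_prop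
    · exact fun ε hε => (hh u ε hε).imp fun N hN n hn => hN n hn u ⟨hu, le_rfl⟩
    · exact fun ε hε => (hv u ε hε).imp fun N hN n hn => hN n hn u ⟨hu, le_rfl⟩
  obtain ⟨h', v', hs⟩ := exists_isStep hR.le hC hh₀ hv₀ hhv hvc
  have hvc' := hs.isTransport.continuous_deriv
  have heq : ∀ u, 0 ≤ u → ∀ r ∈ Icc 0 R, h' u r = h u r := by
    intro u hu r hr
    obtain ⟨W₁, hW₁0, hW₁⟩ := hI.exists_abs_le hC hv₀ u
    obtain ⟨W₂, hW₂0, hW₂⟩ := exists_abs_le_of_continuous hvc R u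
    obtain ⟨W₃, hW₃0, hW₃⟩ := exists_abs_le_of_continuous hvc' R u
    obtain ⟨C, hC0, hlip⟩ := hC.lipschitz (max W₁ W₂)
    set A := C * (W₃ / 2 + 1) / 2 * Real.exp (2 * 1 * u) with hA
    have hA0 : 0 ≤ A := by positivity
    have key : ∀ ε > 0, |h u r - h' u r| ≤ (1 + A) * ε := by
      intro ε hε
      obtain ⟨N, hN⟩ := hh u ε hε
      have h1 := hN (N + 1) (Nat.le_succ N) u ⟨hu, le_rfl⟩ r hr
      obtain ⟨X, hX, -⟩ := (hI.step N).exists_flow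
      have h2 := (hI.step N).isTransport.abs_sub_le hs.isTransport hX (C := 1)
        (M := C * (W₃ / 2 + 1) * ε) (u := u)
        (fun r hr => by rw [hI.init _ r hr, hs.init r hr]) (by positivity) hu
        (fun s hs' ρ hρ => ?_) hr
      · have h3 := abs_sub_le (h u r) (H (N + 1) u r) (h' u r)
        rw [abs_sub_comm (h u r) (H (N + 1) u r)] at h3
        have h4 : C * (W₃ / 2 + 1) * ε / 2 * Real.exp (2 * 1 * u) = A * ε := by rw [hA]; ring
        linarith
      · have hcV := hI.continuous_deriv hv₀ N
        obtain ⟨h3, h4⟩ := hlip (φ₁ := V N s) (φ₂ := v s) (by fun_prop) (by fun_prop)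
          (hI.deriv_right hhv _ s hs'.1) (hd s hs'.1)
          (fun r hr => (hW₁ N s hs' r hr).trans (le_max_left _ _))
          (fun r hr => (hW₂ s hs' r hr).trans (le_max_right _ _)) (hN N le_rfl s hs') ρ hρ
        have h5 := hW₃ s hs' ρ hρ
        have h6 := abs_add_le ((𝓕 (V N s) ρ - 𝓕 (v s) ρ) / 2 * v' s ρ) (𝓢 (V N s) ρ - 𝓢 (v s) ρ)
        rw [abs_mul, abs_div, abs_two] at h6
        have h7 : |𝓕 (V N s) ρ - 𝓕 (v s) ρ| / 2 * |v' s ρ| ≤ C * ε / 2 * W₃ := by gcongr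
        have h8 : C * (W₃ / 2 + 1) * ε ≤ 1 * (C * (W₃ / 2 + 1) * ε) * Real.exp (2 * 1 * s) := by
          rw [one_mul]
          exact le_mul_of_one_le_right (by positivity)
            (Real.one_le_exp (mul_nonneg (by norm_num) hs'.1))
        linarith
    have h0 : |h u r - h' u r| ≤ 0 := by
      refine le_of_forall_pos_le_add fun ε hε => ?_
      have := key (ε / (1 + A)) (by positivity)
      rwa [mul_div_cancel₀ _ (by positivity), ← zero_add ε] at this
    linarith [sub_eq_zero.1 (abs_nonpos_iff.1 h0)]
  have heq' : ∀ u, 0 ≤ u → ∀ r ∈ Icc 0 R, v' u r = v u r := by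
    intro u hu r hr
    have h1 := (hs.isTransport.deriv_right u hu r hr).congr
      (fun x hx => (heq u hu x hx).symm) (heq u hu r hr).symm
    exact (uniqueDiffOn_Icc hR r hr).eq_deriv _ h1 (hd u hu r hr)
  obtain ⟨X, hX, hD⟩ := hs.exists_flow
  refine ⟨h, v, X, ⟨hhc, hvc, hd, fun u hu r hr => ?_⟩, fun r hr => ?_, hX,
    fun u hu r hr s hs' => ?_⟩
  · rw [← heq' u hu r hr]
    exact (hs.isTransport.deriv_left u hu r hr).congr (fun x hx => (heq x hx r hr).symm)
      (heq u hu r hr).symm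
  · rw [← heq 0 le_rfl r hr, hs.init r hr]
  · have hmem := (hX.isChar u hu r).mem
    rw [← heq' s hs'.1 _ (hmem s)]
    exact (hD u hu r hr s hs').congr (fun x hx => (heq' x hx.1 _ (hmem x)).symm)
      (heq' s hs'.1 _ (hmem s)).symm

end Iteration

/-! ### Weighted radial means -/

/-- The weighted radial mean `∫₀¹ tᵏ φ(r t) dt`. -/
def radMean (k : ℕ) (φ : ℝ → ℝ) (r : ℝ) : ℝ := ∫ t in (0:ℝ)..1, t ^ k * φ (r * t)

section RadMean

variable {R : ℝ} {k : ℕ} {φ ψ : ℝ → ℝ}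

@[fun_prop]
theorem continuous_radMean_family {Φ : ℝ → ℝ → ℝ} (hΦ : Continuous ↿Φ) :
    Continuous ↿(fun u => radMean k (Φ u)) := by
  unfold radMean
  fun_prop

@[fun_prop]
theorem continuous_radMean (hφ : Continuous φ) : Continuous (radMean k φ) := by
  unfold radMean
  fun_prop

theorem mul_mem_Icc {r t : ℝ} (hr : r ∈ Icc 0 R) (ht : t ∈ Icc (0:ℝ) 1) : r * t ∈ Icc 0 R :=
  ⟨mul_nonneg hr.1 ht.1, (mul_le_of_le_one_right hr.1 ht.2).trans hr.2⟩

theorem radMean_zero_right : radMean k φ 0 = φ 0 / (k + 1) := by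
  simp [radMean, intervalIntegral.integral_mul_const]
  ring

theorem radMean_mono (hφ : Continuous φ) (hψ : Continuous ψ) (h : ∀ r ∈ Icc 0 R, φ r ≤ ψ r)
    {r : ℝ} (hr : r ∈ Icc 0 R) : radMean k φ r ≤ radMean k ψ r := by
  refine intervalIntegral.integral_mono_on zero_le_one
    (by apply Continuous.intervalIntegrable; fun_prop)
    (by apply Continuous.intervalIntegrable; fun_prop) fun t ht => ?_
  exact mul_le_mul_of_nonneg_left (h _ (mul_mem_Icc hr ht)) (pow_nonneg ht.1 k)

theorem radMean_const (c r : ℝ) : radMean k (fun _ => c) r = c / (k + 1) := by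
  simp [radMean, intervalIntegral.integral_mul_const]
  ring

theorem radMean_mem_Icc (hφ : Continuous φ) {a b : ℝ} (h : ∀ r ∈ Icc 0 R, φ r ∈ Icc a b)
    {r : ℝ} (hr : r ∈ Icc 0 R) : radMean k φ r ∈ Icc (a / (k + 1)) (b / (k + 1)) := by
  rw [← radMean_const (k := k) a r, ← radMean_const (k := k) b r]
  exact ⟨radMean_mono (by fun_prop) hφ (fun r hr => (h r hr).1) hr,
    radMean_mono hφ (by fun_prop) (fun r hr => (h r hr).2) hr⟩

theorem abs_radMean_sub_le (hφ : Continuous φ) (hψ : Continuous ψ) {a b m : ℝ}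
    (h : ∀ t ∈ Icc (0:ℝ) 1, |φ (a * t) - ψ (b * t)| ≤ m) :
    |radMean k φ a - radMean k ψ b| ≤ m := by
  unfold radMean
  rw [← intervalIntegral.integral_sub (by apply Continuous.intervalIntegrable; fun_prop)
    (by apply Continuous.intervalIntegrable; fun_prop)]
  have := intervalIntegral.norm_integral_le_of_norm_le_const (a := (0:ℝ)) (b := 1)
    (f := fun t => t ^ k * φ (a * t) - t ^ k * ψ (b * t)) (C := m) (by
      intro t ht
      rw [uIoc_of_le zero_le_one] at ht
      have ht' : t ∈ Icc (0:ℝ) 1 := ⟨ht.1.le, ht.2⟩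
      rw [← mul_sub, Real.norm_eq_abs, abs_mul, abs_of_nonneg (pow_nonneg ht'.1 k)]
      exact (mul_le_of_le_one_left (abs_nonneg _) (pow_le_one₀ ht'.1 ht'.2)).trans (h t ht'))
  simpa using this

theorem abs_radMean_le (hφ : Continuous φ) {m : ℝ} (h : ∀ r ∈ Icc 0 R, |φ r| ≤ m) {r : ℝ}
    (hr : r ∈ Icc 0 R) : |radMean k φ r| ≤ m := by
  have := abs_radMean_sub_le (k := k) (ψ := fun _ => 0) (b := 0) (a := r) (m := m) hφ (by fun_prop)
    (fun t ht => by simpa using h _ (mul_mem_Icc hr ht))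
  simpa [radMean_const] using this

theorem pow_mul_radMean (r : ℝ) :
    r ^ (k + 1) * radMean k φ r = ∫ s in (0:ℝ)..r, s ^ k * φ s := by
  have := intervalIntegral.mul_integral_comp_mul_left (a := (0:ℝ)) (b := 1) r
    (f := fun s => s ^ k * φ s)
  rw [mul_zero, mul_one] at this
  rw [← this, radMean, pow_succ', mul_assoc, ← intervalIntegral.integral_const_mul (r ^ k)]
  congr 1
  refine intervalIntegral.integral_congr fun t _ => ?_
  change r ^ k * (t ^ k * φ (r * t)) = (r * t) ^ k * φ (r * t)
  ring

theorem hasDerivAt_radMean (hφ : Continuous φ) {r : ℝ} (hr : 0 < r) :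
    HasDerivAt (radMean k φ) ((φ r - (k + 1) * radMean k φ r) / r) r := by
  have hr' := hr.ne'
  have h1 : HasDerivAt (fun r => ∫ s in (0:ℝ)..r, s ^ k * φ s) (r ^ k * φ r) r :=
    (Continuous.integral_hasStrictDerivAt (by fun_prop) 0 r).hasDerivAt
  have h2 := h1.div (hasDerivAt_pow (k + 1) r) (pow_ne_zero _ hr')
  refine (h2.congr_deriv ?_).congr_of_eventuallyEq ?_
  · rw [← pow_mul_radMean]
    push_cast
    field_simp
    ring
  · filter_upwards [lt_mem_nhds hr] with x hx
    have : x ^ (k + 1) ≠ 0 := pow_ne_zero _ hx.ne'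
    simp only [Pi.div_apply]
    rw [← pow_mul_radMean]
    field_simp

theorem sub_radMean_zero_eq (hψ : Continuous ψ) (hφ : ∀ r, HasDerivAt φ (r * ψ r) r) (r : ℝ) :
    φ r - radMean 0 φ r = r ^ 2 * radMean 2 ψ r := by
  have hφc : Continuous φ := continuous_iff_continuousAt.2 fun r => (hφ r).continuousAt
  rcases eq_or_ne r 0 with rfl | hr
  · simp [radMean_zero_right]
  have h1 := intervalIntegral.integral_eq_sub_of_hasDerivAt (a := 0) (b := r)
    (f := fun s => s * φ s) (f' := fun s => φ s + s ^ 2 * ψ s)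
    (fun s _ => ((hasDerivAt_id s).mul (hφ s)).congr_deriv (by simp; ring))
    (by apply Continuous.intervalIntegrable; fun_prop)
  rw [intervalIntegral.integral_add (by apply Continuous.intervalIntegrable; fun_prop)
    (by apply Continuous.intervalIntegrable; fun_prop), ← pow_mul_radMean] at h1
  have h2 := pow_mul_radMean (k := 0) (φ := φ) r
  simp only [zero_add, pow_one, pow_zero, one_mul] at h2
  rw [← h2] at h1
  apply mul_left_cancel₀ hr
  linear_combination -h1

theorem hasDerivWithinAt_mul_radMean_one (hφ : Continuous φ) : ∀ r ∈ Icc 0 R,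
    HasDerivWithinAt (fun r => r * radMean 1 φ r) (φ r - radMean 1 φ r) (Icc 0 R) r := by
  refine hasDerivWithinAt_Icc_of_Ioo (by fun_prop) (by fun_prop) fun r hr => ?_
  refine ((hasDerivAt_id r).mul (hasDerivAt_radMean hφ hr.1)).congr_deriv ?_
  have := hr.1.ne'
  simp only [id]
  push_cast
  field_simp
  ring

theorem mul_mul_radMean_one {h : ℝ → ℝ}
    (hh : ∀ r ∈ Icc 0 R, HasDerivWithinAt h (φ r) (Icc 0 R) r) (hφ : Continuous φ) {r : ℝ}
    (hr : r ∈ Icc 0 R) : r * (r * radMean 1 φ r) = r * h r - ∫ s in (0:ℝ)..r, h s := by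
  have hsub : Icc 0 r ⊆ Icc 0 R := Icc_subset_Icc_right hr.2
  have hhc : ContinuousOn h (Icc 0 r) :=
    fun s hs => (hh s (hsub hs)).continuousWithinAt.mono hsub
  have hhi : IntervalIntegrable h MeasureTheory.volume 0 r :=
    hhc.intervalIntegrable_of_Icc hr.1
  have h1 := intervalIntegral.integral_eq_sub_of_hasDerivAt_of_le (a := 0) (b := r) hr.1
    (f := fun s => s * h s) (f' := fun s => h s + s * φ s) (continuousOn_id.mul hhc)
    (fun s hs => ((hasDerivAt_id s).mul ((hh s ⟨hs.1.le, hs.2.le.trans hr.2⟩).hasDerivAt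
      (Icc_mem_nhds hs.1 (hs.2.trans_le hr.2)))).congr_deriv (by simp))
    (hhi.add (by apply Continuous.intervalIntegrable; fun_prop))
  rw [intervalIntegral.integral_add hhi (by apply Continuous.intervalIntegrable; fun_prop)] at h1
  have h2 := pow_mul_radMean (k := 1) (φ := φ) r
  simp only [pow_one] at h2
  rw [← h2] at h1
  linear_combination h1

/-- The mean value `h - r * radMean 1 h'` of `h` satisfies the same bound as `h`. -/
theorem abs_sub_mul_radMean_one_le {h : ℝ → ℝ}
    (hh : ∀ r ∈ Icc 0 R, HasDerivWithinAt h (φ r) (Icc 0 R) r) (hφ : Continuous φ) {d : ℝ}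
    (hd : ∀ r ∈ Icc 0 R, |h r| ≤ d) {r : ℝ} (hr : r ∈ Icc 0 R) :
    |h r - r * radMean 1 φ r| ≤ d := by
  rcases eq_or_lt_of_le hr.1 with h0 | h0
  · simpa [← h0] using hd r hr
  have h3 := intervalIntegral.norm_integral_le_of_norm_le_const (a := 0) (b := r) (f := h) (C := d)
    (fun s hs => by
      rw [uIoc_of_le hr.1] at hs
      exact hd s ⟨hs.1.le, hs.2.trans hr.2⟩)
  rw [sub_zero, abs_of_pos h0, Real.norm_eq_abs] at h3
  have h4 : r * |h r - r * radMean 1 φ r| ≤ r * d := by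
    rw [← abs_of_pos h0, ← abs_mul, abs_of_pos h0, mul_sub, mul_mul_radMean_one hh hφ hr,
      sub_sub_cancel, mul_comm r d]
    exact h3
  exact le_of_mul_le_mul_left h4 h0

/-- The radial mean of the derivative is controlled by the function itself. -/
theorem abs_mul_radMean_one_le {h : ℝ → ℝ}
    (hh : ∀ r ∈ Icc 0 R, HasDerivWithinAt h (φ r) (Icc 0 R) r) (hφ : Continuous φ) {d : ℝ}
    (hd : ∀ r ∈ Icc 0 R, |h r| ≤ d) {r : ℝ} (hr : r ∈ Icc 0 R) :
    |r * radMean 1 φ r| ≤ 2 * d := by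
  have h1 := abs_sub_mul_radMean_one_le hh hφ hd hr
  have h2 := hd r hr
  rw [abs_le] at h1 h2 ⊢
  constructor <;> linarith

end RadMean

/-! ### Uniform moduli of continuity -/

/-- The operator `Φ` maps functions bounded by `V` to uniformly bounded functions, and transforms
their moduli of continuity linearly. -/
def HasModulus (R V : ℝ) (Φ : (ℝ → ℝ) → ℝ → ℝ) : Prop :=
  ∃ B, 0 ≤ B ∧ ∀ φ : ℝ → ℝ, Continuous φ → (∀ r ∈ Icc 0 R, |φ r| ≤ V) →
    (∀ r ∈ Icc 0 R, |Φ φ r| ≤ B) ∧ ∀ δ η : ℝ, 0 < δ → δ ≤ η →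
      (∀ a ∈ Icc 0 R, ∀ b ∈ Icc 0 R, |a - b| ≤ δ → |φ a - φ b| ≤ η) →
      ∀ a ∈ Icc 0 R, ∀ b ∈ Icc 0 R, |a - b| ≤ δ → |Φ φ a - Φ φ b| ≤ B * η

section HasModulus

variable {R V : ℝ} {Φ Ψ : (ℝ → ℝ) → ℝ → ℝ}

theorem hasModulus_eval : HasModulus R V (fun φ => φ) := by
  refine ⟨max V 1, by positivity, fun φ _ hV => ⟨fun r hr => (hV r hr).trans (le_max_left _ _),
    fun δ η hδ hδη h a ha b hb hab => (h a ha b hb hab).trans ?_⟩⟩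
  exact le_mul_of_one_le_left (hδ.le.trans hδη) (le_max_right _ _)

theorem hasModulus_of_lipschitz {B : ℝ} (hB : 0 ≤ B)
    (h : ∀ φ : ℝ → ℝ, Continuous φ → ∀ r ∈ Icc 0 R, |Φ φ r| ≤ B)
    (h' : ∀ φ : ℝ → ℝ, Continuous φ → ∀ a ∈ Icc 0 R, ∀ b ∈ Icc 0 R,
      |Φ φ a - Φ φ b| ≤ B * |a - b|) : HasModulus R V Φ := by
  refine ⟨B, hB, fun φ hφ _ => ⟨h φ hφ, fun δ η _ hδη _ a ha b hb hab =>
    (h' φ hφ a ha b hb).trans ?_⟩⟩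
  exact mul_le_mul_of_nonneg_left (hab.trans hδη) hB

theorem hasModulus_radius : HasModulus R V (fun _ r => r) :=
  hasModulus_of_lipschitz (B := max R 1) (by positivity)
    (fun _ _ r hr => by rw [abs_of_nonneg hr.1]; exact hr.2.trans (le_max_left _ _))
    (fun _ _ a _ b _ => le_mul_of_one_le_left (abs_nonneg _) (le_max_right _ _))

theorem hasModulus_const (c : ℝ) : HasModulus R V (fun _ _ => c) :=
  hasModulus_of_lipschitz (abs_nonneg c) (fun _ _ _ _ => le_rfl)
    (fun _ _ a _ b _ => by simp; positivity)

theorem HasModulus.add (hΦ : HasModulus R V Φ) (hΨ : HasModulus R V Ψ) :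
    HasModulus R V (fun φ r => Φ φ r + Ψ φ r) := by
  obtain ⟨B, hB, h⟩ := hΦ
  obtain ⟨B', hB', h'⟩ := hΨ
  refine ⟨B + B', by positivity, fun φ hφ hV => ⟨fun r hr => ?_,
    fun δ η hδ hδη hm a ha b hb hab => ?_⟩⟩
  · exact (abs_add_le _ _).trans (add_le_add ((h φ hφ hV).1 r hr) ((h' φ hφ hV).1 r hr))
  · rw [add_sub_add_comm, add_mul]
    exact (abs_add_le _ _).trans (add_le_add ((h φ hφ hV).2 δ η hδ hδη hm a ha b hb hab)
      ((h' φ hφ hV).2 δ η hδ hδη hm a ha b hb hab))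

theorem HasModulus.mul (hΦ : HasModulus R V Φ) (hΨ : HasModulus R V Ψ) :
    HasModulus R V (fun φ r => Φ φ r * Ψ φ r) := by
  obtain ⟨B, hB, h⟩ := hΦ
  obtain ⟨B', hB', h'⟩ := hΨ
  refine ⟨2 * (B * B'), by positivity, fun φ hφ hV => ⟨fun r hr => ?_,
    fun δ η hδ hδη hm a ha b hb hab => ?_⟩⟩
  · have h1 := (h φ hφ hV).1 r hr
    have h2 := (h' φ hφ hV).1 r hr
    rw [abs_mul]
    have : |Φ φ r| * |Ψ φ r| ≤ B * B' := by gcongr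
    have : 0 ≤ B * B' := by positivity
    linarith
  · have h1 := (h φ hφ hV).1 a ha
    have h2 := (h' φ hφ hV).1 b hb
    have h3 := (h φ hφ hV).2 δ η hδ hδη hm a ha b hb hab
    have h4 := (h' φ hφ hV).2 δ η hδ hδη hm a ha b hb hab
    have e : Φ φ a * Ψ φ a - Φ φ b * Ψ φ b =
        Φ φ a * (Ψ φ a - Ψ φ b) + (Φ φ a - Φ φ b) * Ψ φ b := by ring
    rw [e]
    refine (abs_add_le _ _).trans ?_
    rw [abs_mul, abs_mul]
    have h0 : 0 ≤ η := hδ.le.trans hδη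
    have h5 : |Φ φ a| * |Ψ φ a - Ψ φ b| ≤ B * (B' * η) := by gcongr
    have h6 : |Φ φ a - Φ φ b| * |Ψ φ b| ≤ B * η * B' := by gcongr
    linarith

theorem HasModulus.radMean (hΦ : HasModulus R V Φ) (hc : ∀ φ, Continuous φ → Continuous (Φ φ))
    (k : ℕ) : HasModulus R V (fun φ => radMean k (Φ φ)) := by
  obtain ⟨B, hB, h⟩ := hΦ
  refine ⟨B, hB, fun φ hφ hV => ⟨fun r hr => abs_radMean_le (hc φ hφ) (h φ hφ hV).1 hr,
    fun δ η hδ hδη hm a ha b hb hab => ?_⟩⟩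
  refine abs_radMean_sub_le (hc φ hφ) (hc φ hφ) fun t ht => ?_
  refine (h φ hφ hV).2 δ η hδ hδη hm _ (mul_mem_Icc ha ht) _ (mul_mem_Icc hb ht) ?_
  rw [← sub_mul, abs_mul, abs_of_nonneg ht.1]
  exact (mul_le_of_le_one_right (abs_nonneg _) ht.2).trans hab

end HasModulus

/-! ### The truncated Einstein operators -/

/-- Truncation of a real number to the interval `[-x, x]`. -/
def trunc (x p : ℝ) : ℝ := max (-x) (min p x)

@[fun_prop]
theorem continuous_trunc (x : ℝ) : Continuous (trunc x) := by
  unfold trunc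
  fun_prop

theorem trunc_of_abs_le {x p : ℝ} (h : |p| ≤ x) : trunc x p = p := by
  rw [abs_le] at h
  rw [trunc, min_eq_left h.2, max_eq_right h.1]

theorem abs_trunc_le {x : ℝ} (hx : 0 ≤ x) (p : ℝ) : |trunc x p| ≤ x :=
  abs_le.2 ⟨le_max_left _ _, max_le (by linarith) (min_le_right _ _)⟩

theorem abs_trunc_sub_le (x p q : ℝ) : |trunc x p - trunc x q| ≤ |p - q| := by
  unfold trunc
  refine (abs_max_sub_max_le_max _ _ _ _).trans (max_le (by simp) ?_)
  exact (abs_min_sub_min_le_max _ _ _ _).trans (max_le le_rfl (by simp))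

theorem abs_exp_sub_exp_le {a b m : ℝ} (ha : a ≤ m) (hb : b ≤ m) :
    |Real.exp a - Real.exp b| ≤ Real.exp m * |a - b| := by
  have := (convex_Iic m).norm_image_sub_le_of_norm_hasDerivWithin_le (f := Real.exp)
    (f' := Real.exp) (C := Real.exp m) (fun t _ => (Real.hasDerivAt_exp t).hasDerivWithinAt)
    (fun t ht => by rw [Real.norm_eq_abs, Real.abs_exp]; exact Real.exp_le_exp.2 ht) hb ha
  simpa only [Real.norm_eq_abs] using this

/-- The truncation of `∂_r h̄`, as a function of `φ = ∂_r h`. -/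
def truncMean (x : ℝ) (φ : ℝ → ℝ) (r : ℝ) : ℝ := trunc x (radMean 1 φ r)

/-- The metric coefficient `f`, as a function of `φ = ∂_r h`. -/
def lapse (κ x : ℝ) (φ : ℝ → ℝ) (r : ℝ) : ℝ :=
  Real.exp (κ / 2 * ∫ s in (0:ℝ)..r, s * truncMean x φ s ^ 2)

/-- The function `f * (1 - Λ * r ^ 2)`, whose radial mean is the metric coefficient `f̃`. -/
def lapseLam (Λ κ x : ℝ) (φ : ℝ → ℝ) (r : ℝ) : ℝ := lapse κ x φ r * (1 - Λ * r ^ 2)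

/-- The radial derivative of `lapseLam`, divided by `r`. -/
def lapseLamDeriv (Λ κ x : ℝ) (φ : ℝ → ℝ) (r : ℝ) : ℝ :=
  κ / 2 * truncMean x φ r ^ 2 * lapse κ x φ r * (1 - Λ * r ^ 2) - 2 * Λ * lapse κ x φ r

/-- The metric coefficient `f̃`. -/
def velocity (Λ κ x : ℝ) (φ : ℝ → ℝ) : ℝ → ℝ := radMean 0 (lapseLam Λ κ x φ)

/-- The coefficient `G`, divided by `r`. -/
def damping (Λ κ x : ℝ) (φ : ℝ → ℝ) (r : ℝ) : ℝ := radMean 2 (lapseLamDeriv Λ κ x φ) r / 2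

/-- The source term `G * (h - h̄)`. -/
def source (Λ κ x : ℝ) (φ : ℝ → ℝ) (r : ℝ) : ℝ :=
  r * damping Λ κ x φ r * (r * radMean 1 φ r)

/-- The radial derivative of the source term. -/
def sourceDeriv (Λ κ x : ℝ) (φ : ℝ → ℝ) (r : ℝ) : ℝ :=
  r * ((lapseLamDeriv Λ κ x φ r / 2 - 3 * damping Λ κ x φ r) * radMean 1 φ r
    + damping Λ κ x φ r * φ r)

section Operators

variable {Λ κ x R : ℝ} {φ : ℝ → ℝ} {v : ℝ → ℝ → ℝ}

@[fun_prop]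
theorem continuous_truncMean_family (hv : Continuous ↿v) :
    Continuous ↿(fun u => truncMean x (v u)) := by
  unfold truncMean
  fun_prop

@[fun_prop]
theorem continuous_truncMean (hφ : Continuous φ) : Continuous (truncMean x φ) := by
  unfold truncMean
  fun_prop

@[fun_prop]
theorem continuous_lapse_family (hv : Continuous ↿v) :
    Continuous ↿(fun u => lapse κ x (v u)) := by
  unfold lapse truncMean radMean
  fun_prop

@[fun_prop]
theorem continuous_lapse (hφ : Continuous φ) : Continuous (lapse κ x φ) := by
  unfold lapse
  fun_prop

@[fun_prop]
theorem continuous_lapseLam_family (hv : Continuous ↿v) :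
    Continuous ↿(fun u => lapseLam Λ κ x (v u)) := by
  unfold lapseLam
  fun_prop

@[fun_prop]
theorem continuous_lapseLam (hφ : Continuous φ) : Continuous (lapseLam Λ κ x φ) := by
  unfold lapseLam
  fun_prop

@[fun_prop]
theorem continuous_lapseLamDeriv_family (hv : Continuous ↿v) :
    Continuous ↿(fun u => lapseLamDeriv Λ κ x (v u)) := by
  unfold lapseLamDeriv
  fun_prop

@[fun_prop]
theorem continuous_lapseLamDeriv (hφ : Continuous φ) : Continuous (lapseLamDeriv Λ κ x φ) := by
  unfold lapseLamDeriv
  fun_prop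

@[fun_prop]
theorem continuous_velocity_family (hv : Continuous ↿v) :
    Continuous ↿(fun u => velocity Λ κ x (v u)) :=
  continuous_radMean_family (continuous_lapseLam_family hv)

@[fun_prop]
theorem continuous_velocity (hφ : Continuous φ) : Continuous (velocity Λ κ x φ) := by
  unfold velocity
  fun_prop

@[fun_prop]
theorem continuous_damping_family (hv : Continuous ↿v) :
    Continuous ↿(fun u => damping Λ κ x (v u)) :=
  (continuous_radMean_family (continuous_lapseLamDeriv_family hv)).div_const 2

@[fun_prop]
theorem continuous_damping (hφ : Continuous φ) : Continuous (damping Λ κ x φ) := by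
  unfold damping
  fun_prop

@[fun_prop]
theorem continuous_source_family (hv : Continuous ↿v) :
    Continuous ↿(fun u => source Λ κ x (v u)) := by
  unfold source
  fun_prop

@[fun_prop]
theorem continuous_source (hφ : Continuous φ) : Continuous (source Λ κ x φ) := by
  unfold source
  fun_prop

@[fun_prop]
theorem continuous_sourceDeriv_family (hv : Continuous ↿v) :
    Continuous ↿(fun u => sourceDeriv Λ κ x (v u)) := by
  unfold sourceDeriv
  fun_prop

@[fun_prop]
theorem continuous_sourceDeriv (hφ : Continuous φ) : Continuous (sourceDeriv Λ κ x φ) := by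
  unfold sourceDeriv
  fun_prop

theorem hasDerivAt_lapseLam (hφ : Continuous φ) (r : ℝ) :
    HasDerivAt (lapseLam Λ κ x φ) (r * lapseLamDeriv Λ κ x φ r) r := by
  have h1 : HasDerivAt (fun r => ∫ s in (0:ℝ)..r, s * truncMean x φ s ^ 2)
      (r * truncMean x φ r ^ 2) r :=
    (Continuous.integral_hasStrictDerivAt (by fun_prop) 0 r).hasDerivAt
  have h2 := (h1.const_mul (κ / 2)).exp.mul (((hasDerivAt_pow 2 r).const_mul Λ).const_sub 1)
  refine h2.congr_deriv ?_
  simp only [lapseLamDeriv, lapse]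
  push_cast
  ring

theorem lapseLam_sub_velocity (hφ : Continuous φ) (r : ℝ) :
    lapseLam Λ κ x φ r - velocity Λ κ x φ r = 2 * (r ^ 2 * damping Λ κ x φ r) := by
  rw [velocity, sub_radMean_zero_eq (by fun_prop) (hasDerivAt_lapseLam hφ), damping]
  ring

theorem hasDerivWithinAt_velocity (hφ : Continuous φ) : ∀ r ∈ Icc 0 R,
    HasDerivWithinAt (velocity Λ κ x φ) (2 * (r * damping Λ κ x φ r)) (Icc 0 R) r := by
  refine hasDerivWithinAt_Icc_of_Ioo (by fun_prop) (by fun_prop) fun r hr => ?_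
  refine (hasDerivAt_radMean (by fun_prop) hr.1).congr_deriv ?_
  have := lapseLam_sub_velocity (Λ := Λ) (κ := κ) (x := x) hφ r
  have h0 := hr.1.ne'
  rw [velocity] at this
  push_cast
  rw [zero_add, one_mul, this]
  field_simp

theorem hasDerivWithinAt_mul_damping (hφ : Continuous φ) : ∀ r ∈ Icc 0 R,
    HasDerivWithinAt (fun r => r * damping Λ κ x φ r)
      (lapseLamDeriv Λ κ x φ r / 2 - 2 * damping Λ κ x φ r) (Icc 0 R) r := by
  refine hasDerivWithinAt_Icc_of_Ioo (by fun_prop) (by fun_prop) fun r hr => ?_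
  refine ((hasDerivAt_id r).mul ((hasDerivAt_radMean (k := 2)
    (φ := lapseLamDeriv Λ κ x φ) (by fun_prop) hr.1).div_const 2)).congr_deriv ?_
  have h0 := hr.1.ne'
  simp only [id, damping]
  push_cast
  field_simp
  ring

theorem hasDerivWithinAt_source (hφ : Continuous φ) : ∀ r ∈ Icc 0 R,
    HasDerivWithinAt (source Λ κ x φ) (sourceDeriv Λ κ x φ r) (Icc 0 R) r := fun r hr => by
  refine ((hasDerivWithinAt_mul_damping hφ r hr).mul
    (hasDerivWithinAt_mul_radMean_one hφ r hr)).congr_deriv ?_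
  simp only [sourceDeriv]
  ring

/-- The upper bound of the lapse on `[0, R]`. -/
def lapseBound (κ x R : ℝ) : ℝ := Real.exp (κ / 2 * (R * x ^ 2 * R))

theorem abs_integral_truncMean_sub_le (hx : 0 ≤ x) (hφ : Continuous φ) {a b : ℝ}
    (ha : a ∈ Icc 0 R) (hb : b ∈ Icc 0 R) :
    |(∫ s in (0:ℝ)..a, s * truncMean x φ s ^ 2) - ∫ s in (0:ℝ)..b, s * truncMean x φ s ^ 2|
      ≤ R * x ^ 2 * |a - b| := by
  rw [intervalIntegral.integral_interval_sub_left
    (by apply Continuous.intervalIntegrable; fun_prop)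
    (by apply Continuous.intervalIntegrable; fun_prop)]
  refine intervalIntegral.norm_integral_le_of_norm_le_const (E := ℝ) fun s hs => ?_
  have hs' : s ∈ Icc 0 R := (uIoc_subset_uIcc.trans (uIcc_subset_Icc hb ha)) hs
  have h1 := abs_trunc_le hx (radMean 1 φ s)
  rw [Real.norm_eq_abs, abs_mul, abs_of_nonneg hs'.1, abs_pow]
  have := hs'.2
  have := hs'.1.trans hs'.2
  unfold truncMean
  gcongr

theorem lapse_exponent_le (hκ : 0 ≤ κ) (hx : 0 ≤ x) (hφ : Continuous φ) {r : ℝ}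
    (hr : r ∈ Icc 0 R) :
    κ / 2 * (∫ s in (0:ℝ)..r, s * truncMean x φ s ^ 2) ≤ κ / 2 * (R * x ^ 2 * R) := by
  have h0 : (0:ℝ) ∈ Icc 0 R := ⟨le_rfl, hr.1.trans hr.2⟩
  have := abs_integral_truncMean_sub_le hx hφ hr h0
  rw [intervalIntegral.integral_same, sub_zero, sub_zero, abs_of_nonneg hr.1] at this
  have h1 : R * x ^ 2 * r ≤ R * x ^ 2 * R :=
    mul_le_mul_of_nonneg_left hr.2 (mul_nonneg h0.2 (sq_nonneg x))
  exact mul_le_mul_of_nonneg_left ((le_abs_self _).trans (this.trans h1)) (by positivity)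

theorem lapse_le (hκ : 0 ≤ κ) (hx : 0 ≤ x) (hφ : Continuous φ) {r : ℝ} (hr : r ∈ Icc 0 R) :
    lapse κ x φ r ≤ lapseBound κ x R :=
  Real.exp_le_exp.2 (lapse_exponent_le hκ hx hφ hr)

theorem one_le_lapse (hκ : 0 ≤ κ) {r : ℝ} (hr : 0 ≤ r) : 1 ≤ lapse κ x φ r := by
  rw [lapse, Real.one_le_exp_iff]
  refine mul_nonneg (by positivity) (intervalIntegral.integral_nonneg hr fun s hs => ?_)
  exact mul_nonneg hs.1 (sq_nonneg _)

theorem lapseBound_pos : 0 < lapseBound κ x R := Real.exp_pos _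

theorem abs_one_sub_le (hΛ : 0 ≤ Λ) {r : ℝ} (hr : r ∈ Icc 0 R) :
    |1 - Λ * r ^ 2| ≤ 1 + Λ * R ^ 2 := by
  have h1 : Λ * r ^ 2 ≤ Λ * R ^ 2 := by
    have := hr.1
    have := hr.2
    gcongr
  have : 0 ≤ Λ * r ^ 2 := by positivity
  rw [abs_le]
  constructor <;> linarith

theorem abs_lapseLam_le (hΛ : 0 ≤ Λ) (hκ : 0 ≤ κ) (hx : 0 ≤ x) (hφ : Continuous φ) {r : ℝ}
    (hr : r ∈ Icc 0 R) : |lapseLam Λ κ x φ r| ≤ lapseBound κ x R * (1 + Λ * R ^ 2) := by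
  rw [lapseLam, abs_mul, abs_of_nonneg (zero_le_one.trans (one_le_lapse hκ hr.1))]
  exact mul_le_mul (lapse_le hκ hx hφ hr) (abs_one_sub_le hΛ hr) (abs_nonneg _) lapseBound_pos.le

theorem abs_lapseLamDeriv_add_le (hΛ : 0 ≤ Λ) (hκ : 0 ≤ κ) (hx : 0 ≤ x) (hφ : Continuous φ)
    {r : ℝ} (hr : r ∈ Icc 0 R) :
    |lapseLamDeriv Λ κ x φ r + 2 * Λ * lapse κ x φ r|
      ≤ κ / 2 * x ^ 2 * (lapseBound κ x R * (1 + Λ * R ^ 2)) := by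
  have e : lapseLamDeriv Λ κ x φ r + 2 * Λ * lapse κ x φ r =
      κ / 2 * truncMean x φ r ^ 2 * lapseLam Λ κ x φ r := by
    rw [lapseLamDeriv, lapseLam]
    ring
  rw [e, abs_mul, abs_mul, abs_pow, abs_of_nonneg (by positivity : 0 ≤ κ / 2)]
  have h1 := abs_lapseLam_le hΛ hκ hx hφ hr
  have h2 := abs_trunc_le hx (radMean 1 φ r)
  unfold truncMean
  gcongr

theorem abs_damping_le (hΛ : 0 ≤ Λ) (hκ : 0 ≤ κ) (hx : 0 ≤ x) (hφ : Continuous φ)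
    {r : ℝ} (hr : r ∈ Icc 0 R) :
    |damping Λ κ x φ r| ≤ κ / 2 * x ^ 2 * (lapseBound κ x R * (1 + Λ * R ^ 2))
      + 2 * Λ * lapseBound κ x R := by
  have key : |radMean 2 (lapseLamDeriv Λ κ x φ) r| ≤
      κ / 2 * x ^ 2 * (lapseBound κ x R * (1 + Λ * R ^ 2)) + 2 * Λ * lapseBound κ x R := by
    refine abs_radMean_le (by fun_prop) (fun r hr => ?_) hr
    have h1 := abs_lapseLamDeriv_add_le hΛ hκ hx hφ hr
    have h2 : 2 * Λ * lapse κ x φ r ≤ 2 * Λ * lapseBound κ x R :=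
      mul_le_mul_of_nonneg_left (lapse_le hκ hx hφ hr) (by positivity)
    have h3 : 0 ≤ 2 * Λ * lapse κ x φ r := mul_nonneg (by positivity) (Real.exp_pos _).le
    rw [abs_le] at h1 ⊢
    constructor <;> linarith
  rw [damping, abs_div, abs_two]
  have := abs_nonneg (radMean 2 (lapseLamDeriv Λ κ x φ) r)
  linarith

end Operators

section Estimates

variable {Λ κ x R : ℝ} {φ φ₁ φ₂ h₁ h₂ : ℝ → ℝ}

theorem radMean_sub {k : ℕ} (hφ₁ : Continuous φ₁) (hφ₂ : Continuous φ₂) (r : ℝ) :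
    radMean k (fun r => φ₁ r - φ₂ r) r = radMean k φ₁ r - radMean k φ₂ r := by
  unfold radMean
  rw [← intervalIntegral.integral_sub (by apply Continuous.intervalIntegrable; fun_prop)
    (by apply Continuous.intervalIntegrable; fun_prop)]
  refine intervalIntegral.integral_congr fun t _ => ?_
  exact mul_sub _ _ _

theorem abs_mul_radMean_one_sub_le (hφ₁ : Continuous φ₁) (hφ₂ : Continuous φ₂)
    (hh₁ : ∀ r ∈ Icc 0 R, HasDerivWithinAt h₁ (φ₁ r) (Icc 0 R) r)
    (hh₂ : ∀ r ∈ Icc 0 R, HasDerivWithinAt h₂ (φ₂ r) (Icc 0 R) r) {d : ℝ}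
    (hd : ∀ r ∈ Icc 0 R, |h₁ r - h₂ r| ≤ d) {r : ℝ} (hr : r ∈ Icc 0 R) :
    |r * radMean 1 φ₁ r - r * radMean 1 φ₂ r| ≤ 2 * d := by
  rw [← mul_sub, ← radMean_sub hφ₁ hφ₂]
  exact abs_mul_radMean_one_le (h := fun r => h₁ r - h₂ r)
    (fun r hr => (hh₁ r hr).sub (hh₂ r hr)) (by fun_prop) hd hr

theorem abs_lapse_sub_le (hκ : 0 ≤ κ) (hx : 0 ≤ x) (hφ₁ : Continuous φ₁) (hφ₂ : Continuous φ₂)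
    {d : ℝ} (hd : ∀ r ∈ Icc 0 R, |r * radMean 1 φ₁ r - r * radMean 1 φ₂ r| ≤ 2 * d) {r : ℝ}
    (hr : r ∈ Icc 0 R) :
    |lapse κ x φ₁ r - lapse κ x φ₂ r| ≤ lapseBound κ x R * (κ / 2 * (4 * x * R)) * d := by
  have hd0 : 0 ≤ 2 * d := (abs_nonneg _).trans (hd r hr)
  have key : |(∫ s in (0:ℝ)..r, s * truncMean x φ₁ s ^ 2)
      - ∫ s in (0:ℝ)..r, s * truncMean x φ₂ s ^ 2| ≤ 2 * x * (2 * d) * R := by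
    rw [← intervalIntegral.integral_sub (by apply Continuous.intervalIntegrable; fun_prop)
      (by apply Continuous.intervalIntegrable; fun_prop)]
    have := intervalIntegral.norm_integral_le_of_norm_le_const (a := 0) (b := r)
      (f := fun s => s * truncMean x φ₁ s ^ 2 - s * truncMean x φ₂ s ^ 2)
      (C := 2 * x * (2 * d)) (fun s hs => by
        rw [uIoc_of_le hr.1] at hs
        have hs' : s ∈ Icc 0 R := ⟨hs.1.le, hs.2.trans hr.2⟩
        have e : s * truncMean x φ₁ s ^ 2 - s * truncMean x φ₂ s ^ 2 =
          (truncMean x φ₁ s + truncMean x φ₂ s) * (s * (truncMean x φ₁ s - truncMean x φ₂ s)) := by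
          ring
        have h1 : |truncMean x φ₁ s + truncMean x φ₂ s| ≤ 2 * x := by
          have := abs_trunc_le hx (radMean 1 φ₁ s)
          have := abs_trunc_le hx (radMean 1 φ₂ s)
          unfold truncMean
          exact (abs_add_le _ _).trans (by linarith)
        have h2 : |s * (truncMean x φ₁ s - truncMean x φ₂ s)| ≤ 2 * d := by
          refine le_trans ?_ (hd s hs')
          rw [← mul_sub, abs_mul, abs_mul]
          exact mul_le_mul_of_nonneg_left (abs_trunc_sub_le _ _ _) (abs_nonneg s)
        rw [Real.norm_eq_abs, e, abs_mul]
        gcongr)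
    rw [Real.norm_eq_abs, sub_zero, abs_of_nonneg hr.1] at this
    exact this.trans (mul_le_mul_of_nonneg_left hr.2 (by positivity))
  refine (abs_exp_sub_exp_le (lapse_exponent_le hκ hx hφ₁ hr)
    (lapse_exponent_le hκ hx hφ₂ hr)).trans ?_
  rw [← mul_sub, abs_mul, abs_of_nonneg (by positivity : 0 ≤ κ / 2), lapseBound,
    mul_assoc (Real.exp _)]
  refine mul_le_mul_of_nonneg_left ?_ (Real.exp_pos _).le
  refine (mul_le_mul_of_nonneg_left key (by positivity)).trans_eq ?_
  ring

theorem velocity_source_lipschitz (hΛ : 0 ≤ Λ) (hκ : 0 ≤ κ) (hx : 0 ≤ x) (hR : 0 ≤ R) {V : ℝ}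
    (hV : 0 ≤ V) :
    ∃ C, 0 ≤ C ∧ ∀ {h₁ h₂ φ₁ φ₂ : ℝ → ℝ} {d : ℝ}, Continuous φ₁ → Continuous φ₂ →
      (∀ r ∈ Icc 0 R, HasDerivWithinAt h₁ (φ₁ r) (Icc 0 R) r) →
      (∀ r ∈ Icc 0 R, HasDerivWithinAt h₂ (φ₂ r) (Icc 0 R) r) →
      (∀ r ∈ Icc 0 R, |φ₂ r| ≤ V) →
      (∀ r ∈ Icc 0 R, |h₁ r - h₂ r| ≤ d) → ∀ r ∈ Icc 0 R,
        |velocity Λ κ x φ₁ r - velocity Λ κ x φ₂ r| ≤ C * d ∧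
        |source Λ κ x φ₁ r - source Λ κ x φ₂ r| ≤ C * d := by
  set B := κ / 2 * x ^ 2 * (lapseBound κ x R * (1 + Λ * R ^ 2)) + 2 * Λ * lapseBound κ x R with hB
  set A := lapseBound κ x R * (κ / 2 * (4 * x * R)) * (1 + Λ * R ^ 2) with hA
  have hlb := (lapseBound_pos (κ := κ) (x := x) (R := R)).le
  have hB0 : 0 ≤ B := by positivity
  have hA0 : 0 ≤ A := by positivity
  refine ⟨A + 2 * (R * B) + V * A, by positivity, ?_⟩
  intro h₁ h₂ φ₁ φ₂ d hφ₁ hφ₂ hh₁ hh₂ hV₂ hd r hr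
  have hd0 : 0 ≤ d := (abs_nonneg _).trans (hd r hr)
  have hp : ∀ r ∈ Icc 0 R, |r * radMean 1 φ₁ r - r * radMean 1 φ₂ r| ≤ 2 * d :=
    fun r hr => abs_mul_radMean_one_sub_le hφ₁ hφ₂ hh₁ hh₂ hd hr
  have hL : ∀ r ∈ Icc 0 R, |lapseLam Λ κ x φ₁ r - lapseLam Λ κ x φ₂ r| ≤ A * d := by
    intro r hr
    rw [lapseLam, lapseLam, ← sub_mul, abs_mul]
    have h1 := abs_lapse_sub_le hκ hx hφ₁ hφ₂ hp hr
    have h2 := abs_one_sub_le hΛ hr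
    calc _ ≤ lapseBound κ x R * (κ / 2 * (4 * x * R)) * d * (1 + Λ * R ^ 2) := by gcongr
      _ = A * d := by rw [hA]; ring
  have hF : |velocity Λ κ x φ₁ r - velocity Λ κ x φ₂ r| ≤ A * d :=
    abs_radMean_sub_le (by fun_prop) (by fun_prop) fun t ht => hL _ (mul_mem_Icc hr ht)
  refine ⟨hF.trans ?_, ?_⟩
  · have : 0 ≤ (2 * (R * B) + V * A) * d := by positivity
    linarith
  · have e1 := lapseLam_sub_velocity (Λ := Λ) (κ := κ) (x := x) hφ₁ r
    have e2 := lapseLam_sub_velocity (Λ := Λ) (κ := κ) (x := x) hφ₂ r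
    have e : source Λ κ x φ₁ r - source Λ κ x φ₂ r =
        r * damping Λ κ x φ₁ r * (r * radMean 1 φ₁ r - r * radMean 1 φ₂ r) +
        radMean 1 φ₂ r * (((lapseLam Λ κ x φ₁ r - lapseLam Λ κ x φ₂ r) -
          (velocity Λ κ x φ₁ r - velocity Λ κ x φ₂ r)) / 2) := by
      rw [source, source]
      linear_combination (radMean 1 φ₂ r / 2) * (e2 - e1)
    rw [e]
    refine (abs_add_le _ _).trans ?_
    have h1 : |r * damping Λ κ x φ₁ r * (r * radMean 1 φ₁ r - r * radMean 1 φ₂ r)|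
        ≤ R * B * (2 * d) := by
      rw [abs_mul, abs_mul, abs_of_nonneg hr.1]
      have := abs_damping_le hΛ hκ hx hφ₁ hr
      have := hp r hr
      have := hr.2
      gcongr
    have h2 : |radMean 1 φ₂ r * (((lapseLam Λ κ x φ₁ r - lapseLam Λ κ x φ₂ r) -
        (velocity Λ κ x φ₁ r - velocity Λ κ x φ₂ r)) / 2)| ≤ V * (A * d) := by
      rw [abs_mul]
      have h3 : |((lapseLam Λ κ x φ₁ r - lapseLam Λ κ x φ₂ r) -
        (velocity Λ κ x φ₁ r - velocity Λ κ x φ₂ r)) / 2| ≤ A * d := by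
        have := hL r hr
        rw [abs_le] at this hF ⊢
        constructor <;> linarith
      have := abs_radMean_le (k := 1) hφ₂ hV₂ hr
      gcongr
    have : 0 ≤ A * d := by positivity
    linarith

theorem hasModulus_truncMean (hx : 0 ≤ x) {V : ℝ} : HasModulus R V (truncMean x) := by
  obtain ⟨B, hB, h⟩ := (hasModulus_eval (R := R) (V := V)).radMean (fun _ h => h) 1
  refine ⟨max B x, le_max_of_le_left hB, fun φ hφ hV => ⟨fun r hr =>
    (abs_trunc_le hx _).trans (le_max_right _ _), fun δ η hδ hδη hm a ha b hb hab => ?_⟩⟩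
  refine (abs_trunc_sub_le _ _ _).trans (((h φ hφ hV).2 δ η hδ hδη hm a ha b hb hab).trans ?_)
  exact mul_le_mul_of_nonneg_right (le_max_left _ _) (hδ.le.trans hδη)

theorem hasModulus_lapse (hκ : 0 ≤ κ) (hx : 0 ≤ x) (hR : 0 ≤ R) {V : ℝ} :
    HasModulus R V (lapse κ x) := by
  have hlb := (lapseBound_pos (κ := κ) (x := x) (R := R)).le
  refine hasModulus_of_lipschitz
    (B := lapseBound κ x R * (1 + κ / 2 * (R * x ^ 2))) (by positivity)
    (fun φ hφ r hr => ?_) (fun φ hφ a ha b hb => ?_)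
  · rw [lapse, abs_of_pos (Real.exp_pos _)]
    refine (lapse_le hκ hx hφ hr).trans (le_mul_of_one_le_right hlb ?_)
    have : 0 ≤ κ / 2 * (R * x ^ 2) := by positivity
    linarith
  · refine (abs_exp_sub_exp_le (lapse_exponent_le hκ hx hφ ha)
      (lapse_exponent_le hκ hx hφ hb)).trans ?_
    rw [← mul_sub, abs_mul, abs_of_nonneg (by positivity : 0 ≤ κ / 2), mul_assoc (lapseBound κ x R)]
    refine mul_le_mul_of_nonneg_left ?_ hlb
    have h1 := mul_le_mul_of_nonneg_left (abs_integral_truncMean_sub_le hx hφ ha hb)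
      (by positivity : 0 ≤ κ / 2)
    refine h1.trans ?_
    have := abs_nonneg (a - b)
    linarith

theorem hasModulus_lapseLamDeriv (hκ : 0 ≤ κ) (hx : 0 ≤ x) (hR : 0 ≤ R) {V : ℝ} :
    HasModulus R V (lapseLamDeriv Λ κ x) := by
  have hT := hasModulus_truncMean (R := R) hx (V := V)
  have hL := hasModulus_lapse hκ hx hR (V := V)
  have hr := hasModulus_radius (R := R) (V := V)
  convert (((hasModulus_const (κ / 2)).mul (hT.mul hT)).mul hL).mul ((hasModulus_const 1).add
    ((hasModulus_const (-Λ)).mul (hr.mul hr))) |>.add ((hasModulus_const (-2 * Λ)).mul hL) using 1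
  funext φ r
  rw [lapseLamDeriv]
  ring

theorem hasModulus_damping (hκ : 0 ≤ κ) (hx : 0 ≤ x) (hR : 0 ≤ R) {V : ℝ} :
    HasModulus R V (damping Λ κ x) := by
  convert ((hasModulus_lapseLamDeriv hκ hx hR (Λ := Λ) (V := V)).radMean
    (fun φ hφ => by fun_prop) 2).mul (hasModulus_const (1 / 2)) using 1
  funext φ r
  rw [damping]
  ring

theorem hasModulus_sourceDeriv (hκ : 0 ≤ κ) (hx : 0 ≤ x) (hR : 0 ≤ R) {V : ℝ} :
    HasModulus R V (sourceDeriv Λ κ x) := by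
  have hD := hasModulus_damping hκ hx hR (Λ := Λ) (V := V)
  have hL := hasModulus_lapseLamDeriv hκ hx hR (Λ := Λ) (V := V)
  have he := hasModulus_eval (R := R) (V := V)
  have hp := he.radMean (fun _ h => h) 1
  convert hasModulus_radius.mul (((((hasModulus_const (1 / 2)).mul hL).add
    ((hasModulus_const (-3)).mul hD)).mul hp).add (hD.mul he)) using 1
  funext φ r
  rw [sourceDeriv]
  ring

/-- Smallness of the truncation parameter `x` in terms of the parameters of the problem. -/
structure IsSmall (Λ κ R x : ℝ) : Prop where
  cosm_pos : 0 < Λ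
  coupling_pos : 0 < κ
  radius_pos : 0 < R
  pos : 0 < x
  bound_le : lapseBound κ x R ≤ 7 / 6
  bound_lt : lapseBound κ x R < Λ * R ^ 2 / 3
  coupling_le : κ * x ^ 2 * (1 + Λ * R ^ 2) ≤ Λ / 6

theorem exists_isSmall (hΛ : 0 < Λ) (hκ : 0 < κ) (hR : Real.sqrt (3 / Λ) < R) :
    ∃ x, IsSmall Λ κ R x := by
  have hR0 : 0 < R := (Real.sqrt_nonneg _).trans_lt hR
  have h3 : 1 < Λ * R ^ 2 / 3 := by
    have := (Real.sqrt_lt' hR0).1 hR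
    rw [div_lt_iff₀ hΛ] at this
    linarith
  have c1 : Filter.Tendsto (fun x => lapseBound κ x R) (nhdsWithin 0 (Ioi 0)) (nhds 1) := by
    have : Continuous (fun x => lapseBound κ x R) := by unfold lapseBound; fun_prop
    have := this.tendsto 0
    simp only [lapseBound] at this ⊢
    simpa using this.mono_left nhdsWithin_le_nhds
  have c2 : Filter.Tendsto (fun x => κ * x ^ 2 * (1 + Λ * R ^ 2)) (nhdsWithin 0 (Ioi 0))
      (nhds 0) := by
    have : Continuous (fun x => κ * x ^ 2 * (1 + Λ * R ^ 2)) := by fun_prop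
    simpa using (this.tendsto 0).mono_left nhdsWithin_le_nhds
  obtain ⟨x, h1, h2, h4, h5⟩ := ((c1.eventually_lt_const (by norm_num : (1:ℝ) < 7 / 6)).and
    ((c1.eventually_lt_const h3).and ((c2.eventually_lt_const (by positivity : 0 < Λ / 6)).and
      self_mem_nhdsWithin))).exists
  exact ⟨x, hΛ, hκ, hR0, h5, h1.le, h2, h4.le⟩

theorem IsSmall.lapseLamDeriv_mem (h : IsSmall Λ κ R x) (hφ : Continuous φ) {r : ℝ}
    (hr : r ∈ Icc 0 R) : lapseLamDeriv Λ κ x φ r ∈ Icc (-(5 / 2 * Λ)) (-(3 / 2 * Λ)) := by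
  have hΛ := h.cosm_pos
  have hκ := h.coupling_pos
  have h1 := abs_lapseLamDeriv_add_le hΛ.le hκ.le h.pos.le hφ hr
  have h2 := lapse_le hκ.le h.pos.le hφ hr
  have h3 := one_le_lapse (x := x) (φ := φ) hκ.le hr.1
  have h4 : κ / 2 * x ^ 2 * (lapseBound κ x R * (1 + Λ * R ^ 2)) ≤ 7 / 6 / 2 * (Λ / 6) := by
    calc _ = lapseBound κ x R / 2 * (κ * x ^ 2 * (1 + Λ * R ^ 2)) := by ring
      _ ≤ _ := by
        have := h.bound_le
        have := h.coupling_le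
        gcongr
  have h5 : Λ * lapse κ x φ r ≤ Λ * (7 / 6) := mul_le_mul_of_nonneg_left (h2.trans h.bound_le) hΛ.le
  have h6 : Λ * 1 ≤ Λ * lapse κ x φ r := mul_le_mul_of_nonneg_left h3 hΛ.le
  rw [abs_le] at h1
  constructor <;> linarith

theorem IsSmall.damping_mem (h : IsSmall Λ κ R x) (hφ : Continuous φ) {r : ℝ}
    (hr : r ∈ Icc 0 R) : damping Λ κ x φ r ∈ Icc (-(5 / 12 * Λ)) (-(Λ / 4)) := by
  have := radMean_mem_Icc (k := 2) (by fun_prop) (fun r hr => h.lapseLamDeriv_mem hφ hr) hr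
  rw [damping]
  norm_num at this
  constructor <;> linarith [this.1, this.2]

/-- The defect of the coefficient in `sourceDeriv` is dominated by the damping. -/
theorem IsSmall.abs_defect_le (h : IsSmall Λ κ R x) (hφ : Continuous φ) {r : ℝ}
    (hr : r ∈ Icc 0 R) :
    |lapseLamDeriv Λ κ x φ r / 2 - 3 * damping Λ κ x φ r| ≤ Λ / 2 := by
  have h1 := h.lapseLamDeriv_mem hφ hr
  have h2 := h.damping_mem hφ hr
  rw [abs_le]
  constructor <;> linarith [h1.1, h1.2, h2.1, h2.2]

theorem IsSmall.abs_sourceDeriv_le (h : IsSmall Λ κ R x) {N : ℝ} (hφ : Continuous φ)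
    (hN : ∀ r ∈ Icc 0 R, |φ r| ≤ N) {r : ℝ} (hr : r ∈ Icc 0 R) :
    |sourceDeriv Λ κ x φ r| ≤ R * Λ * N := by
  have hΛ := h.cosm_pos
  have hN0 : 0 ≤ N := (abs_nonneg _).trans (hN r hr)
  have h1 := h.abs_defect_le hφ hr
  have h2 := h.damping_mem hφ hr
  have h2' : |damping Λ κ x φ r| ≤ Λ / 2 := by
    rw [abs_le]
    constructor <;> linarith [h2.1, h2.2]
  have h3 := abs_radMean_le (k := 1) hφ hN hr
  have h4 := hN r hr
  rw [sourceDeriv, abs_mul, abs_of_nonneg hr.1]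
  have : |(lapseLamDeriv Λ κ x φ r / 2 - 3 * damping Λ κ x φ r) * radMean 1 φ r
      + damping Λ κ x φ r * φ r| ≤ Λ / 2 * N + Λ / 2 * N := by
    refine (abs_add_le _ _).trans ?_
    rw [abs_mul, abs_mul]
    gcongr
  calc _ ≤ R * (Λ / 2 * N + Λ / 2 * N) := by
        have := hr.2
        have := hr.1.trans hr.2
        gcongr
    _ = _ := by ring

theorem IsSmall.velocity_zero_pos : 0 < velocity Λ κ x φ 0 := by
  simp [velocity, radMean_zero_right, lapseLam, lapse]

theorem IsSmall.velocity_right_neg (h : IsSmall Λ κ R x) (hφ : Continuous φ) :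
    velocity Λ κ x φ R < 0 := by
  have hΛ := h.cosm_pos
  have hκ := h.coupling_pos
  have h1 : velocity Λ κ x φ R ≤ radMean 0 (fun s => lapseBound κ x R - Λ * s ^ 2) R := by
    refine radMean_mono (R := R) (by fun_prop) (by fun_prop) (fun r hr => ?_)
      ⟨h.radius_pos.le, le_rfl⟩
    have h2 := lapse_le hκ.le h.pos.le hφ hr
    have h3 : Λ * r ^ 2 * 1 ≤ Λ * r ^ 2 * lapse κ x φ r :=
      mul_le_mul_of_nonneg_left (one_le_lapse hκ.le hr.1) (by positivity)
    rw [lapseLam]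
    linarith
  have h2 : radMean 0 (fun s => lapseBound κ x R - Λ * s ^ 2) R =
      lapseBound κ x R - Λ * R ^ 2 / 3 := by
    simp only [radMean, pow_zero, one_mul, mul_pow]
    rw [intervalIntegral.integral_sub (by simp) (by apply Continuous.intervalIntegrable; fun_prop)]
    simp only [intervalIntegral.integral_const, intervalIntegral.integral_const_mul,
      integral_pow]
    norm_num
    ring
  have := h.bound_lt
  linarith

theorem IsSmall.isVelocity (h : IsSmall Λ κ R x) {v : ℝ → ℝ → ℝ} (hv : Continuous ↿v) :
    IsVelocity R (fun u => velocity Λ κ x (v u)) (fun u r => r * damping Λ κ x (v u) r) where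
  continuous_left := by fun_prop
  continuous_right := by fun_prop
  deriv u := hasDerivWithinAt_velocity (by fun_prop)
  nonpos u r hr := by
    have := (h.damping_mem (φ := v u) (by fun_prop) hr).2
    have := h.cosm_pos
    exact mul_nonpos_of_nonneg_of_nonpos hr.1 (by linarith)
  pos_zero u := IsSmall.velocity_zero_pos
  neg_right u := h.velocity_right_neg (by fun_prop)
  bounded := by
    have hΛ := h.cosm_pos
    have hR := h.radius_pos
    have hlb := (lapseBound_pos (κ := κ) (x := x) (R := R)).le
    refine ⟨lapseBound κ x R * (1 + Λ * R ^ 2) + R * Λ, fun u r hr => ⟨?_, ?_⟩⟩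
    · have := abs_radMean_le (k := 0) (φ := lapseLam Λ κ x (v u)) (by fun_prop)
        (fun r hr => abs_lapseLam_le hΛ.le h.coupling_pos.le h.pos.le
          (φ := v u) (by fun_prop) hr) hr
      have : 0 ≤ R * Λ := by positivity
      rw [velocity]
      linarith
    · have h2 := h.damping_mem (φ := v u) (by fun_prop) hr
      have h2' : |damping Λ κ x (v u) r| ≤ Λ := by
        rw [abs_le]
        constructor <;> linarith [h2.1, h2.2]
      rw [abs_mul, abs_of_nonneg hr.1]
      have : r * |damping Λ κ x (v u) r| ≤ R * Λ := by
        have := hr.2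
        gcongr
      have : 0 ≤ lapseBound κ x R * (1 + Λ * R ^ 2) := by positivity
      linarith

theorem IsSmall.isCoefficients (h : IsSmall Λ κ R x) :
    IsCoefficients R (velocity Λ κ x) (fun φ r => r * damping Λ κ x φ r) (source Λ κ x)
      (sourceDeriv Λ κ x) where
  isVelocity := h.isVelocity
  continuous_source hv := by fun_prop
  continuous_source_deriv hv := by fun_prop
  source_deriv hφ := hasDerivWithinAt_source hφ
  source_deriv_le := by
    refine ⟨R * Λ, mul_nonneg h.radius_pos.le h.cosm_pos.le, fun hφ hN r hr => ?_⟩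
    exact h.abs_sourceDeriv_le hφ hN hr
  modulus V := by
    obtain ⟨B, hB, h1⟩ := (hasModulus_radius (R := R) (V := V)).mul
      (hasModulus_damping h.coupling_pos.le h.pos.le h.radius_pos.le (Λ := Λ))
    obtain ⟨B', hB', h2⟩ := hasModulus_sourceDeriv h.coupling_pos.le h.pos.le h.radius_pos.le
      (Λ := Λ) (V := V)
    refine ⟨B + B', by positivity, fun {φ} hφ hV {δ η} hδ hδη hm a ha b hb hab => ?_⟩
    have h3 := (h1 φ hφ hV).2 δ η hδ hδη hm a ha b hb hab
    have h4 := (h2 φ hφ hV).2 δ η hδ hδη hm a ha b hb hab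
    have h0 := hδ.le.trans hδη
    have := mul_nonneg hB h0
    have := mul_nonneg hB' h0
    constructor <;> linarith
  lipschitz V := by
    obtain ⟨C, hC, h1⟩ := velocity_source_lipschitz h.cosm_pos.le h.coupling_pos.le h.pos.le
      h.radius_pos.le (le_max_right V 0)
    exact ⟨C, hC, fun hφ₁ hφ₂ hh₁ hh₂ _ hV₂ hd r hr => h1 hφ₁ hφ₂ hh₁ hh₂
      (fun r hr => (hV₂ r hr).trans (le_max_left _ _)) hd r hr⟩

end Estimates

/-! ### Maximum principles -/

section MaximumPrinciple

variable {Λ κ x R N₀ : ℝ} {F h v w α β : ℝ → ℝ → ℝ} {X : ℝ → ℝ → ℝ → ℝ}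

/-- A maximum principle for a damped equation along characteristics whose forcing term is nonlocal
in the radial variable. -/
theorem IsFlow.abs_le_of_nonlocal (hX : IsFlow R F X) (hw : Continuous ↿w) (hα : Continuous ↿α)
    (hd : ∀ u, 0 ≤ u → ∀ r ∈ Icc 0 R, ∀ s ∈ Icc 0 u,
      HasDerivWithinAt (fun s => w s (X u r s))
        (α s (X u r s) * w s (X u r s) + β s (X u r s)) (Icc 0 u) s)
    (hα0 : ∀ s, 0 ≤ s → ∀ r ∈ Icc 0 R, α s r ≤ 0)
    (hβ : ∀ s, 0 ≤ s → ∀ N, (∀ r ∈ Icc 0 R, |w s r| ≤ N) → ∀ r ∈ Icc 0 R,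
      |β s r| ≤ -α s r * N)
    (h0 : ∀ r ∈ Icc 0 R, |w 0 r| ≤ N₀) {u : ℝ} (hu : 0 ≤ u) {r : ℝ} (hr : r ∈ Icc 0 R) :
    |w u r| ≤ N₀ := by
  obtain ⟨⟨τ, ρ⟩, ⟨hτ, hρ⟩, hmax⟩ :=
    (isCompact_Icc.prod isCompact_Icc : IsCompact (Icc 0 u ×ˢ Icc 0 R)).exists_isMaxOn
      ⟨(u, r), ⟨hu, le_rfl⟩, hr⟩ (f := fun p => |w p.1 p.2|)
      (Continuous.continuousOn (by fun_prop))
  replace hmax : ∀ s ∈ Icc 0 u, ∀ r ∈ Icc 0 R, |w s r| ≤ |w τ ρ| :=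
    fun s hs r hr => hmax (show (s, r) ∈ Icc 0 u ×ˢ Icc 0 R from ⟨hs, hr⟩)
  refine (hmax u ⟨hu, le_rfl⟩ r hr).trans ?_
  set N := |w τ ρ|
  by_contra! hN
  have hχ := hX.isChar τ hτ.1 ρ
  have hXc := hX.continuous
  set Γ : ℝ → ℝ := fun s => ∫ t in (0:ℝ)..s, α t (X τ ρ t) with hΓ
  have hΓd : ∀ s, HasDerivAt Γ (α s (X τ ρ s)) s := fun s =>
    (Continuous.integral_hasStrictDerivAt (by fun_prop) 0 s).hasDerivAt
  have := abs_le_of_damped (y := fun s => w s (X τ ρ s)) (a := fun s => α s (X τ ρ s))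
    (b := fun s => β s (X τ ρ s)) (B := fun s => N - (N - N₀) * Real.exp (Γ s))
    (B' := fun s => -((N - N₀) * (Real.exp (Γ s) * α s (X τ ρ s)))) hτ.1 (hd τ hτ.1 ρ hρ)
    (fun s hs => hα0 s hs.1 _ (hχ.mem s))
    (fun s _ => ((((hΓd s).exp).const_mul _).const_sub N).hasDerivWithinAt) (fun s hs => ?_) ?_
  · simp only [hX.self τ hτ.1 ρ hρ] at this
    have h1 : 0 < (N - N₀) * Real.exp (Γ τ) := mul_pos (by linarith) (Real.exp_pos _)
    change N ≤ _ at this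
    linarith
  · have := hβ s hs.1 N (hmax s ⟨hs.1, hs.2.trans hτ.2⟩) _ (hχ.mem s)
    linarith
  · have : Γ 0 = 0 := by simp [hΓ]
    simpa [this] using h0 _ (hχ.mem 0)

theorem IsSmall.abs_deriv_le (hs : IsSmall Λ κ R x) (hv : Continuous ↿v) (hX : IsFlow R F X)
    (hD : IsDerivTransport R (fun u r => r * damping Λ κ x (v u) r)
      (fun u => sourceDeriv Λ κ x (v u)) X v)
    (h0 : ∀ r ∈ Icc 0 R, |v 0 r| ≤ N₀) {u : ℝ} (hu : 0 ≤ u) {r : ℝ} (hr : r ∈ Icc 0 R) :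
    |v u r| ≤ N₀ := by
  have hΛ := hs.cosm_pos
  refine hX.abs_le_of_nonlocal (α := fun u r => 2 * (r * damping Λ κ x (v u) r))
    (β := fun u r => r * ((lapseLamDeriv Λ κ x (v u) r / 2 - 3 * damping Λ κ x (v u) r)
      * radMean 1 (v u) r)) hv ?_ ?_ ?_ ?_ h0 hu hr
  · have := continuous_damping_family (Λ := Λ) (κ := κ) (x := x) hv
    fun_prop
  · intro u hu r hr s hs
    refine (hD u hu r hr s hs).congr_deriv ?_
    simp only [sourceDeriv]
    ring
  · intro s _ r hr
    have h1 := (hs.damping_mem (φ := v s) (by fun_prop) hr).2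
    have := mul_nonneg hr.1 (by linarith : 0 ≤ -damping Λ κ x (v s) r)
    linarith
  · intro s _ N hN r hr
    have hc : Continuous (v s) := by fun_prop
    have h1 := (hs.damping_mem hc hr).2
    have h2 := hs.abs_defect_le hc hr
    have h3 := abs_radMean_le (k := 1) hc hN hr
    have h4 : 0 ≤ -damping Λ κ x (v s) r := by linarith
    rw [abs_mul, abs_mul, abs_of_nonneg hr.1]
    have h5 : |lapseLamDeriv Λ κ x (v s) r / 2 - 3 * damping Λ κ x (v s) r| ≤
      2 * -damping Λ κ x (v s) r := by linarith
    have := hr.1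
    calc _ ≤ r * (2 * -damping Λ κ x (v s) r * N) := by gcongr
      _ = _ := by ring

theorem IsSmall.abs_le (hs : IsSmall Λ κ R x)
    (hh : IsTransport R F (fun u => source Λ κ x (v u)) h v) (hX : IsFlow R F X)
    (h0 : ∀ r ∈ Icc 0 R, |h 0 r| ≤ N₀) {u : ℝ} (hu : 0 ≤ u) {r : ℝ} (hr : r ∈ Icc 0 R) :
    |h u r| ≤ N₀ := by
  have hΛ := hs.cosm_pos
  have hv := hh.continuous_deriv
  refine hX.abs_le_of_nonlocal (α := fun u r => r * damping Λ κ x (v u) r)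
    (β := fun u r => -(r * damping Λ κ x (v u) r) * (h u r - r * radMean 1 (v u) r))
    hh.continuous ?_ ?_ ?_ ?_ h0 hu hr
  · have := continuous_damping_family (Λ := Λ) (κ := κ) (x := x) hv
    fun_prop
  · intro u hu r hr s hs
    refine (hh.comp_char (hX.isChar u hu r) hs).congr_deriv ?_
    rw [source]
    ring
  · intro s _ r hr
    have h1 := (hs.damping_mem (φ := v s) (by fun_prop) hr).2
    have := mul_nonneg hr.1 (by linarith : 0 ≤ -damping Λ κ x (v s) r)
    linarith
  · intro s hs0 N hN r hr
    have hc : Continuous (v s) := by fun_prop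
    have h1 := (hs.damping_mem hc hr).2
    have h2 := abs_sub_mul_radMean_one_le (hh.deriv_right s hs0) hc hN hr
    have h3 : 0 ≤ -(r * damping Λ κ x (v s) r) := by
      have := mul_nonneg hr.1 (by linarith : 0 ≤ -damping Λ κ x (v s) r)
      linarith
    rw [abs_mul, abs_of_nonneg h3]
    gcongr

end MaximumPrinciple

/-! ### Identification of the coefficients -/

section Identification

variable {Λ κ x R u : ℝ} {h : ℝ → ℝ → ℝ} {φ : ℝ → ℝ}

theorem sub_radAvg_eq (hh : ∀ r ∈ Icc 0 R, HasDerivWithinAt (h u) (φ r) (Icc 0 R) r)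
    (hφ : Continuous φ) {r : ℝ} (hr : r ∈ Icc 0 R) : h u r - radAvg h u r = r * radMean 1 φ r := by
  rcases eq_or_ne r 0 with rfl | h0
  · simp [radAvg]
  · have := mul_mul_radMean_one hh hφ hr
    rw [radAvg, if_neg h0]
    apply mul_left_cancel₀ h0
    rw [this]
    field_simp

theorem metricF_eq (hh : ∀ r ∈ Icc 0 R, HasDerivWithinAt (h u) (φ r) (Icc 0 R) r)
    (hφ : Continuous φ) (hx : ∀ r ∈ Icc 0 R, |φ r| ≤ x) {r : ℝ} (hr : r ∈ Icc 0 R) :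
    metricF κ h u r = lapse κ x φ r := by
  rw [metricF, lapse]
  congr 2
  refine intervalIntegral.integral_congr fun s hs => ?_
  rw [uIcc_of_le hr.1] at hs
  have hs' : s ∈ Icc 0 R := ⟨hs.1, hs.2.trans hr.2⟩
  change (h u s - radAvg h u s) ^ 2 / s = s * truncMean x φ s ^ 2
  rw [sub_radAvg_eq hh hφ hs', truncMean, trunc_of_abs_le (abs_radMean_le hφ hx hs')]
  rcases eq_or_ne s 0 with rfl | h0
  · simp
  · field_simp

theorem metricFt_eq (hh : ∀ r ∈ Icc 0 R, HasDerivWithinAt (h u) (φ r) (Icc 0 R) r)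
    (hφ : Continuous φ) (hx : ∀ r ∈ Icc 0 R, |φ r| ≤ x) {r : ℝ} (hr : r ∈ Icc 0 R) :
    metricFt Λ κ h u r = velocity Λ κ x φ r := by
  rcases eq_or_ne r 0 with rfl | h0
  · simp [metricFt, velocity, radMean_zero_right, lapseLam, lapse]
  have e : ∀ s ∈ uIcc 0 r, metricF κ h u s = lapse κ x φ s := fun s hs => by
    rw [uIcc_of_le hr.1] at hs
    exact metricF_eq hh hφ hx ⟨hs.1, hs.2.trans hr.2⟩
  have h1 := pow_mul_radMean (k := 0) (φ := lapseLam Λ κ x φ) r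
  have h2 : ∫ s in (0:ℝ)..r, lapseLam Λ κ x φ s =
      (∫ s in (0:ℝ)..r, lapse κ x φ s) - Λ * ∫ s in (0:ℝ)..r, lapse κ x φ s * s ^ 2 := by
    rw [← intervalIntegral.integral_const_mul, ← intervalIntegral.integral_sub
      (by apply Continuous.intervalIntegrable; fun_prop)
      (by apply Continuous.intervalIntegrable; fun_prop)]
    refine intervalIntegral.integral_congr fun s _ => ?_
    change lapse κ x φ s * (1 - Λ * s ^ 2) = _
    ring
  simp only [zero_add, pow_one, pow_zero, one_mul] at h1
  rw [metricFt, if_neg h0, intervalIntegral.integral_congr e,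
    intervalIntegral.integral_congr (f := fun s => metricF κ h u s * s ^ 2)
      (g := fun s => lapse κ x φ s * s ^ 2)
      (fun s hs => by simp only [e s hs]), velocity]
  apply mul_left_cancel₀ h0
  rw [h1, h2]
  field_simp

theorem coefG_mul_eq (hh : ∀ r ∈ Icc 0 R, HasDerivWithinAt (h u) (φ r) (Icc 0 R) r)
    (hφ : Continuous φ) (hx : ∀ r ∈ Icc 0 R, |φ r| ≤ x) {r : ℝ} (hr : r ∈ Icc 0 R) :
    coefG Λ κ h u r * (h u r - radAvg h u r) = source Λ κ x φ r := by
  rw [sub_radAvg_eq hh hφ hr, coefG, metricF_eq hh hφ hx hr, metricFt_eq hh hφ hx hr]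
  rcases eq_or_ne r 0 with rfl | h0
  · simp [source]
  have h1 := lapseLam_sub_velocity (Λ := Λ) (κ := κ) (x := x) hφ r
  rw [lapseLam] at h1
  rw [source]
  have e : lapse κ x φ r - velocity Λ κ x φ r - Λ * lapse κ x φ r * r ^ 2 =
      2 * (r ^ 2 * damping Λ κ x φ r) := by
    linear_combination h1
  rw [e]
  field_simp

end Identification

/-! ### Classical solutions -/

section ClassicalSolutions

variable {Λ κ x R : ℝ} {h h' v : ℝ → ℝ → ℝ} {h₀ : ℝ → ℝ}

theorem IsTransport.isC1Solution (hR : 0 < R)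
    (hh : IsTransport R (fun u => velocity Λ κ x (v u)) (fun u => source Λ κ x (v u)) h v)
    (hx : ∀ u, 0 ≤ u → ∀ r ∈ Icc 0 R, |v u r| ≤ x) :
    IsC1Solution Λ κ R h ∧ ∀ u, 0 ≤ u → ∀ r ∈ Icc 0 R, pdR R h u r = v u r := by
  have hc := hh.continuous
  have hv := hh.continuous_deriv
  have hpdR : ∀ u, 0 ≤ u → ∀ r ∈ Icc 0 R, pdR R h u r = v u r := fun u hu r hr =>
    (hh.deriv_right u hu r hr).derivWithin (uniqueDiffOn_Icc hR r hr)
  have hpdU : ∀ u, 0 ≤ u → ∀ r ∈ Icc 0 R, pdU h u r =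
      velocity Λ κ x (v u) r / 2 * v u r + source Λ κ x (v u) r := fun u hu r hr =>
    (hh.deriv_left u hu r hr).derivWithin (uniqueDiffOn_Ici 0 u hu)
  refine ⟨⟨Continuous.continuousOn (by fun_prop), fun u hu r hr =>
    ⟨(hh.deriv_left u hu r hr).differentiableWithinAt,
      (hh.deriv_right u hu r hr).differentiableWithinAt⟩, ?_, ?_, fun u hu r hr => ?_⟩, hpdR⟩
  · have hF := continuous_velocity_family (Λ := Λ) (κ := κ) (x := x) hv
    have hS := continuous_source_family (Λ := Λ) (κ := κ) (x := x) hv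
    have : Continuous (fun p : ℝ × ℝ =>
      velocity Λ κ x (v p.1) p.2 / 2 * v p.1 p.2 + source Λ κ x (v p.1) p.2) :=
      ((hF.div_const 2).mul hv).add hS
    exact this.continuousOn.congr fun p hp => hpdU p.1 hp.1 p.2 hp.2
  · exact (Continuous.continuousOn hv).congr fun p hp => hpdR p.1 hp.1 p.2 hp.2
  · have hr' := Ioc_subset_Icc_self hr
    have hvu : Continuous (v u) := by fun_prop
    rw [coefG_mul_eq (hh.deriv_right u hu) hvu (hx u hu) hr',
      metricFt_eq (hh.deriv_right u hu) hvu (hx u hu) hr', hpdU u hu r hr', hpdR u hu r hr']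
    ring

/-- A classical solution agrees on its domain with a solution of a transport equation; in
particular the equation extends to the center `r = 0`. -/
theorem IsC1Solution.exists_isTransport (hR : 0 < R) (h : IsC1Solution Λ κ R h') :
    ∃ k w, IsTransport R (metricFt Λ κ h')
      (fun u r => coefG Λ κ h' u r * (h' u r - radAvg h' u r)) k w ∧
      ∀ u, 0 ≤ u → ∀ r ∈ Icc 0 R, k u r = h' u r := by
  obtain ⟨hc, hd, hcU, hcR, heq⟩ := h
  set q : ℝ × ℝ → ℝ × ℝ := fun p => (max p.1 0, clampIcc R p.2) with hq
  have hqc : Continuous q := by fun_prop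
  have hqm : ∀ p, q p ∈ Ici (0:ℝ) ×ˢ Icc 0 R := fun p => ⟨le_max_right p.1 0, clampIcc_mem hR.le _⟩
  have hqe : ∀ u, 0 ≤ u → ∀ r ∈ Icc 0 R, q (u, r) = (u, r) := fun u hu r hr => by
    simp only [hq, max_eq_left hu, clampIcc_of_mem hr]
  set k : ℝ → ℝ → ℝ := fun u r => h' (q (u, r)).1 (q (u, r)).2 with hk
  set w : ℝ → ℝ → ℝ := fun u r => pdR R h' (q (u, r)).1 (q (u, r)).2 with hw
  set z : ℝ → ℝ → ℝ := fun u r => pdU h' (q (u, r)).1 (q (u, r)).2 with hz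
  have hkc : Continuous ↿k := hc.comp_continuous hqc hqm
  have hwc : Continuous ↿w := hcR.comp_continuous hqc hqm
  have hzc : Continuous ↿z := hcU.comp_continuous hqc hqm
  have hke : ∀ u, 0 ≤ u → ∀ r ∈ Icc 0 R, k u r = h' u r := fun u hu r hr => by
    simp only [hk, hqe u hu r hr]
  have hwe : ∀ u, 0 ≤ u → ∀ r ∈ Icc 0 R, w u r = pdR R h' u r := fun u hu r hr => by
    simp only [hw, hqe u hu r hr]
  have hze : ∀ u, 0 ≤ u → ∀ r ∈ Icc 0 R, z u r = pdU h' u r := fun u hu r hr => by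
    simp only [hz, hqe u hu r hr]
  have hright : ∀ u, 0 ≤ u → ∀ r ∈ Icc 0 R, HasDerivWithinAt (h' u) (w u r) (Icc 0 R) r :=
    fun u hu r hr => by
      rw [hwe u hu r hr]
      exact (hd u hu r hr).2.hasDerivWithinAt
  have hequation : ∀ u, 0 ≤ u → ∀ r ∈ Icc 0 R, z u r = metricFt Λ κ h' u r / 2 * w u r +
      coefG Λ κ h' u r * (h' u r - radAvg h' u r) := by
    intro u hu
    have hwu : Continuous (w u) := by fun_prop
    have hzu : Continuous (z u) := by fun_prop
    obtain ⟨y, hy⟩ := isCompact_Icc.exists_bound_of_continuousOn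
      (hwu.continuousOn (s := Icc 0 R))
    suffices H : EqOn (z u) (fun r => velocity Λ κ y (w u) r / 2 * w u r + source Λ κ y (w u) r)
        (Icc 0 R) by
      intro r hr
      rw [coefG_mul_eq (hright u hu) hwu hy hr, metricFt_eq (hright u hu) hwu hy hr]
      exact H hr
    have H : EqOn (z u) (fun r => velocity Λ κ y (w u) r / 2 * w u r + source Λ κ y (w u) r)
        (Ioc 0 R) := by
      intro r hr
      have hr' := Ioc_subset_Icc_self hr
      have := heq u hu r hr
      rw [coefG_mul_eq (hright u hu) hwu hy hr', metricFt_eq (hright u hu) hwu hy hr',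
        ← hwe u hu r hr', ← hze u hu r hr'] at this
      change z u r = velocity Λ κ y (w u) r / 2 * w u r + source Λ κ y (w u) r
      linarith
    have := H.closure hzu (by fun_prop)
    rwa [closure_Ioc hR.ne] at this
  refine ⟨k, w, ⟨hkc, hwc, fun u hu r hr => ?_, fun u hu r hr => ?_⟩, hke⟩
  · exact (hright u hu r hr).congr (fun r hr => hke u hu r hr) (hke u hu r hr)
  · have := (hd u hu r hr).1.hasDerivWithinAt
    rw [← hequation u hu r hr, hze u hu r hr]
    exact this.congr (fun u hu => hke u hu r hr) (hke u hu r hr)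

theorem IsC1Solution.eq_of_isTransport (hs : IsSmall Λ κ R x) (h : IsC1Solution Λ κ R h')
    {f v : ℝ → ℝ → ℝ}
    (hf : IsTransport R (fun u => velocity Λ κ x (v u)) (fun u => source Λ κ x (v u)) f v)
    (hx : ∀ u, 0 ≤ u → ∀ r ∈ Icc 0 R, |v u r| ≤ x)
    (h0 : ∀ r ∈ Icc 0 R, h' 0 r = f 0 r) {u : ℝ} (hu : 0 ≤ u) {r : ℝ} (hr : r ∈ Icc 0 R) :
    h' u r = f u r := by
  obtain ⟨k, w, hk, hke⟩ := h.exists_isTransport hs.radius_pos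
  have hv := hf.continuous_deriv
  have hfc := hf.continuous
  have hkc := hk.continuous
  have hw := hk.continuous_deriv
  obtain ⟨X, hX⟩ := exists_isFlow hs.radius_pos.le (hs.isVelocity hv)
  obtain ⟨V, hV0, hV⟩ := exists_abs_le_of_continuous hw R u
  set y := max V x with hy
  have hy0 : 0 ≤ y := le_max_of_le_left hV0
  obtain ⟨A, hA, hlip⟩ := velocity_source_lipschitz hs.cosm_pos.le hs.coupling_pos.le hy0
    hs.radius_pos.le hV0
  set C := A * (V / 2 + 1) with hC
  obtain ⟨⟨τ, ρ⟩, ⟨hτ, hρ⟩, hmax⟩ :=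
    (isCompact_Icc.prod isCompact_Icc : IsCompact (Icc 0 u ×ˢ Icc 0 R)).exists_isMaxOn
      ⟨(u, r), ⟨hu, le_rfl⟩, hr⟩
      (f := fun p => |f p.1 p.2 - k p.1 p.2| * Real.exp (-(2 * C * p.1)))
      (Continuous.continuousOn (by fun_prop))
  set M := |f τ ρ - k τ ρ| * Real.exp (-(2 * C * τ)) with hM
  have hM0 : 0 ≤ M := by positivity
  have hbound : ∀ s ∈ Icc 0 u, ∀ r ∈ Icc 0 R, |f s r - k s r| ≤ M * Real.exp (2 * C * s) := by
    intro s hs r hr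
    have : |f s r - k s r| * Real.exp (-(2 * C * s)) ≤ M :=
      hmax (show (s, r) ∈ Icc 0 u ×ˢ Icc 0 R from ⟨hs, hr⟩)
    rwa [Real.exp_neg, ← div_eq_mul_inv, div_le_iff₀ (Real.exp_pos _)] at this
  have hhalf := hf.abs_sub_le hk hX (fun r hr => by rw [hke 0 le_rfl r hr, h0 r hr]) (C := C)
    hM0 hτ.1 (fun s hsτ r hr => ?_) hρ
  · have hM' : M ≤ M / 2 := by
      rw [hM, Real.exp_neg, ← div_eq_mul_inv, div_le_iff₀ (Real.exp_pos _)]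
      rw [hM, Real.exp_neg, ← div_eq_mul_inv] at hhalf
      exact hhalf
    have h1 := hbound u ⟨hu, le_rfl⟩ r hr
    rw [show M = 0 by linarith, zero_mul] at h1
    rw [← hke u hu r hr]
    linarith [abs_nonpos_iff.1 h1]
  · have hsu : s ∈ Icc 0 u := ⟨hsτ.1, hsτ.2.trans hτ.2⟩
    have hvs : Continuous (v s) := by fun_prop
    have hws : Continuous (w s) := by fun_prop
    have hfd := hf.deriv_right s hsτ.1
    have hkd : ∀ r ∈ Icc 0 R, HasDerivWithinAt (h' s) (w s r) (Icc 0 R) r := fun r hr =>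
      (hk.deriv_right s hsτ.1 r hr).congr (fun r hr => (hke s hsτ.1 r hr).symm)
        (hke s hsτ.1 r hr).symm
    have hvy : ∀ r ∈ Icc 0 R, |v s r| ≤ y := fun r hr =>
      (hx s hsτ.1 r hr).trans (le_max_right _ _)
    have hwy : ∀ r ∈ Icc 0 R, |w s r| ≤ y := fun r hr => (hV s hsu r hr).trans (le_max_left _ _)
    have e1 : velocity Λ κ x (v s) r = velocity Λ κ y (v s) r := by
      rw [← metricFt_eq hfd hvs (hx s hsτ.1) hr, metricFt_eq hfd hvs hvy hr]
    have e2 : source Λ κ x (v s) r = source Λ κ y (v s) r := by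
      rw [← coefG_mul_eq hfd hvs (hx s hsτ.1) hr, coefG_mul_eq hfd hvs hvy hr]
    have e3 : metricFt Λ κ h' s r = velocity Λ κ y (w s) r := metricFt_eq hkd hws hwy hr
    have e4 : coefG Λ κ h' s r * (h' s r - radAvg h' s r) = source Λ κ y (w s) r :=
      coefG_mul_eq hkd hws hwy hr
    obtain ⟨l1, l2⟩ := hlip hvs hws hfd (hk.deriv_right s hsτ.1) (hV s hsu) (hbound s hsu) r hr
    rw [e1, e2, e3, e4]
    refine (abs_add_le _ _).trans ?_
    rw [abs_mul, abs_div, abs_two]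
    have h3 := hV s hsu r hr
    have h4 : |velocity Λ κ y (v s) r - velocity Λ κ y (w s) r| / 2 * |w s r| ≤
        A * (M * Real.exp (2 * C * s)) / 2 * V := by gcongr
    rw [hC] at h4 l2 ⊢
    linarith

theorem bddAbove_abs_image {φ : ℝ → ℝ} (hφ : ContinuousOn φ (Icc 0 R)) :
    BddAbove ((fun r => |φ r|) '' Icc 0 R) :=
  isCompact_Icc.bddAbove_image hφ.abs

theorem IsSmall.exists_solution (hs : IsSmall Λ κ R x) (hh₀ : ContDiffOn ℝ 1 h₀ (Icc 0 R))
    {N₀ N₁ : ℝ} (h0 : ∀ r ∈ Icc 0 R, |h₀ r| ≤ N₀)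
    (h1 : ∀ r ∈ Icc 0 R, |derivWithin h₀ (Icc 0 R) r| ≤ N₁) :
    ∃ h v, IsTransport R (fun u => velocity Λ κ x (v u)) (fun u => source Λ κ x (v u)) h v ∧
      (∀ r ∈ Icc 0 R, h 0 r = h₀ r) ∧
      (∀ u, 0 ≤ u → ∀ r ∈ Icc 0 R, |h u r| ≤ N₀) ∧
      ∀ u, 0 ≤ u → ∀ r ∈ Icc 0 R, |v u r| ≤ N₁ := by
  have hR := hs.radius_pos
  have hu := uniqueDiffOn_Icc hR
  have hdc := hh₀.continuousOn_derivWithin hu le_rfl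
  obtain ⟨h, v, X, hT, hi, hX, hD⟩ := exists_quasilinear_transport hs.isCoefficients hR
    (h₀ := fun r => h₀ (clampIcc R r)) (v₀ := fun r => derivWithin h₀ (Icc 0 R) (clampIcc R r))
    (hh₀.continuousOn.comp_continuous (continuous_clampIcc R) (clampIcc_mem hR.le))
    (hdc.comp_continuous (continuous_clampIcc R) (clampIcc_mem hR.le)) (fun r hr => by
      rw [clampIcc_of_mem hr]
      exact (((hh₀.differentiableOn one_ne_zero) r hr).hasDerivWithinAt).congr
        (fun r hr => by rw [clampIcc_of_mem hr]) (by rw [clampIcc_of_mem hr]))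
  have hi' : ∀ r ∈ Icc 0 R, h 0 r = h₀ r := fun r hr => by
    rw [hi r hr, clampIcc_of_mem hr]
  have hv0 : ∀ r ∈ Icc 0 R, v 0 r = derivWithin h₀ (Icc 0 R) r := fun r hr => by
    rw [← (hT.deriv_right 0 le_rfl r hr).derivWithin (hu r hr)]
    exact derivWithin_congr hi' (hi' r hr)
  exact ⟨h, v, hT, hi', fun u hu r hr => hs.abs_le hT hX (fun r hr => by
      rw [hi' r hr]; exact h0 r hr) hu hr, fun u hu r hr =>
    hs.abs_deriv_le hT.continuous_deriv hX hD (fun r hr => by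
      rw [hv0 r hr]; exact h1 r hr) hu hr⟩

end ClassicalSolutions

/-- Global existence, uniqueness, and a priori bounds for small data:
for `Λ > 0`, `κ > 0`, `R > √(3/Λ)` there are `ε₀, C* > 0` such that any C¹ data `h₀` on
`[0,R]` with `sup|h₀| + sup|h₀'| < ε₀` evolves into a unique global C¹ solution of
`Dh = G(h − h̄)` with `sup|h| = sup|h₀|` and `sup(|h|+|∂_r h|) ≤ (1+C*)(sup|h₀|+sup|h₀'|)`. -/
theorem global_existence_uniqueness_small_data
    (Λ κ R : ℝ) (hΛ : 0 < Λ) (hκ : 0 < κ) (hR : Real.sqrt (3 / Λ) < R) :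
    ∃ ε₀ > (0:ℝ), ∃ Cstar > (0:ℝ), ∀ h₀ : ℝ → ℝ,
      ContDiffOn ℝ 1 h₀ (Icc 0 R) →
      sSup ((fun r => |h₀ r|) '' Icc 0 R)
        + sSup ((fun r => |derivWithin h₀ (Icc 0 R) r|) '' Icc 0 R) < ε₀ →
      ∃ h : ℝ → ℝ → ℝ,
        (IsC1Solution Λ κ R h ∧
          (∀ r ∈ Icc (0:ℝ) R, h 0 r = h₀ r) ∧
          sSup (Set.image2 (fun u r => |h u r|) (Ici 0) (Icc 0 R))
            = sSup ((fun r => |h₀ r|) '' Icc 0 R) ∧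
          (∀ u ∈ Ici (0:ℝ), ∀ r ∈ Icc (0:ℝ) R,
            |h u r| + |pdR R h u r|
              ≤ (1 + Cstar) * (sSup ((fun r => |h₀ r|) '' Icc 0 R)
                  + sSup ((fun r => |derivWithin h₀ (Icc 0 R) r|) '' Icc 0 R)))) ∧
        (∀ h' : ℝ → ℝ → ℝ, IsC1Solution Λ κ R h' →
          (∀ r ∈ Icc (0:ℝ) R, h' 0 r = h₀ r) →
          ∀ u ∈ Ici (0:ℝ), ∀ r ∈ Icc (0:ℝ) R, h' u r = h u r) := by
  obtain ⟨x, hs⟩ := exists_isSmall hΛ hκ hR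
  have hR0 := hs.radius_pos
  refine ⟨x, hs.pos, 1, one_pos, fun h₀ hh₀ hsmall => ?_⟩
  set N₀ := sSup ((fun r => |h₀ r|) '' Icc 0 R) with hN₀
  set N₁ := sSup ((fun r => |derivWithin h₀ (Icc 0 R) r|) '' Icc 0 R) with hN₁
  have hb₀ := bddAbove_abs_image hh₀.continuousOn
  have hb₁ := bddAbove_abs_image
    (hh₀.continuousOn_derivWithin (uniqueDiffOn_Icc hR0) le_rfl)
  have h0 : ∀ r ∈ Icc 0 R, |h₀ r| ≤ N₀ := fun r hr => le_csSup hb₀ ⟨r, hr, rfl⟩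
  have h1 : ∀ r ∈ Icc 0 R, |derivWithin h₀ (Icc 0 R) r| ≤ N₁ :=
    fun r hr => le_csSup hb₁ ⟨r, hr, rfl⟩
  have hmem : (0:ℝ) ∈ Icc 0 R := ⟨le_rfl, hR0.le⟩
  have hN₀0 : 0 ≤ N₀ := (abs_nonneg _).trans (h0 0 hmem)
  have hN₁0 : 0 ≤ N₁ := (abs_nonneg _).trans (h1 0 hmem)
  have hx : N₁ ≤ x := by linarith
  obtain ⟨h, v, hT, hi, hle, hle'⟩ := hs.exists_solution hh₀ h0 h1
  have hvx : ∀ u, 0 ≤ u → ∀ r ∈ Icc 0 R, |v u r| ≤ x := fun u hu r hr => (hle' u hu r hr).trans hx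
  obtain ⟨hsol, hpdR⟩ := hT.isC1Solution hR0 hvx
  refine ⟨h, ⟨hsol, hi, ?_, fun u hu r hr => ?_⟩, fun h' hsol' hi' u hu r hr => ?_⟩
  · apply le_antisymm
    · refine csSup_le ⟨_, mem_image2_of_mem (mem_Ici.2 le_rfl) hmem⟩ ?_
      rintro _ ⟨u, hu, r, hr, rfl⟩
      exact hle u hu r hr
    · refine csSup_le_csSup ⟨N₀, ?_⟩ ⟨_, mem_image_of_mem _ hmem⟩ ?_
      · rintro _ ⟨u, hu, r, hr, rfl⟩
        exact hle u hu r hr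
      · rintro _ ⟨r, hr, rfl⟩
        exact ⟨0, mem_Ici.2 le_rfl, r, hr, by simp only [hi r hr]⟩
  · rw [hpdR u hu r hr]
    have := hle u hu r hr
    have := hle' u hu r hr
    linarith
  · exact hsol'.eq_of_isTransport hs hT hvx (fun r hr => by rw [hi' r hr, hi r hr]) hu hr
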